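/- arXiv:1707.08210 — 3 statements merged into one kernel-verified Lean document; each statement's English description precedes it below -/
import Mathlib

section
/- For every ε > 0 and λ ∈ ℂ, λ is an eigenvalue of the model operator T(ε) if and only if W(ε,λ) = 0, where W(ε,λ) = Ai(ε^{1/3}(λ+i))·Bi(ε^{1/3}(λ−i)) − Ai(ε^{1/3}(λ−i))·Bi(ε^{1/3}(λ+i)) and ε^{1/3} is the real cube root of ε. (Equivalently, the substitution ξ = ε^{1/3}(λ − ix) reduces the eigenvalue problem for T(ε) to finding a nontrivial solution of the Airy equation Y''(ξ) = ξ·Y(ξ) vanishing at both points ε^{1/3}(λ − i) and ε^{1/3}(λ + i).) -/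
open Complex MeasureTheory Real

noncomputable section

/-- `w` is an entire solution of the Airy equation `w'' = z·w`
with prescribed (real) values of `w` and `w'` at the origin. -/
def IsAiry (w : ℂ → ℂ) (w0 w0' : ℝ) : Prop :=
  Differentiable ℂ w ∧ Differentiable ℂ (deriv w) ∧
  (∀ z : ℂ, deriv (deriv w) z = z * w z) ∧
  w 0 = (w0 : ℂ) ∧ deriv w 0 = (w0' : ℂ)

/-- `Ai` is the standard Airy function of the first kind. -/
def IsAiryAi (Ai : ℂ → ℂ) : Prop :=
  IsAiry Ai ((3 : ℝ) ^ (-(2 : ℝ)/3) / Real.Gamma (2/3))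
    (-((3 : ℝ) ^ (-(1 : ℝ)/3)) / Real.Gamma (1/3))

/-- `Bi` is the standard Airy function of the second kind. -/
def IsAiryBi (Bi : ℂ → ℂ) : Prop :=
  IsAiry Bi ((3 : ℝ) ^ (-(1 : ℝ)/6) / Real.Gamma (2/3))
    ((3 : ℝ) ^ ((1 : ℝ)/6) / Real.Gamma (1/3))

/-- The characteristic determinant `W(ε,λ)` of the model problem. -/
def airyW (Ai Bi : ℂ → ℂ) (ε : ℝ) (lam : ℂ) : ℂ :=
  Ai ((ε ^ ((1:ℝ)/3) : ℝ) * (lam + Complex.I)) * Bi ((ε ^ ((1:ℝ)/3) : ℝ) * (lam - Complex.I))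
  - Ai ((ε ^ ((1:ℝ)/3) : ℝ) * (lam - Complex.I)) * Bi ((ε ^ ((1:ℝ)/3) : ℝ) * (lam + Complex.I))

/-- `lam` is an eigenvalue of the model operator `T(ε) y = -ε⁻¹ y'' + i x y`
with Dirichlet boundary conditions on `[-1,1]`. -/
def IsModelEigenvalue (ε : ℝ) (lam : ℂ) : Prop :=
  ∃ y : ℝ → ℂ, ContDiff ℝ 2 y ∧
    (∃ x ∈ Set.Icc (-1 : ℝ) 1, y x ≠ 0) ∧
    (∀ x ∈ Set.Ioo (-1 : ℝ) 1,
      -(ε⁻¹ : ℂ) * deriv (deriv y) x + Complex.I * (x : ℂ) * y x = lam * y x) ∧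
    y (-1) = 0 ∧ y 1 = 0

/-- The Wronskian of two solutions of `y'' = k·y` on `(-1,1)` is constant on `[-1,1]`. -/
theorem wronskian_eq_of_mem_Icc {f f' g g' k : ℝ → ℂ}
    (hf : ∀ x, HasDerivAt f (f' x) x) (hg : ∀ x, HasDerivAt g (g' x) x)
    (hf' : ∀ x ∈ Set.Ioo (-1 : ℝ) 1, HasDerivAt f' (k x * f x) x)
    (hg' : ∀ x ∈ Set.Ioo (-1 : ℝ) 1, HasDerivAt g' (k x * g x) x)
    (hcf : Continuous f') (hcg : Continuous g') {x : ℝ} (hx : x ∈ Set.Icc (-1 : ℝ) 1) :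
    f x * g' x - f' x * g x = f 0 * g' 0 - f' 0 * g 0 := by
  have hfc : Continuous f := continuous_iff_continuousAt.2 fun x => (hf x).continuousAt
  have hgc : Continuous g := continuous_iff_continuousAt.2 fun x => (hg x).continuousAt
  have hder : ∀ x ∈ Set.Ioo (-1 : ℝ) 1,
      HasDerivAt (fun x => f x * g' x - f' x * g x) 0 x := by
    intro x hx
    have h := ((hf x).mul (hg' x hx)).sub ((hf' x hx).mul (hg x))
    refine h.congr_deriv ?_
    ring
  have hsub : Set.Ioo (-1 : ℝ) 1 ⊆
      {x | f x * g' x - f' x * g x = f 0 * g' 0 - f' 0 * g 0} := by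
    intro z hz
    exact isOpen_Ioo.is_const_of_deriv_eq_zero (𝕜 := ℝ) isPreconnected_Ioo
      (fun x hx => (hder x hx).differentiableAt.differentiableWithinAt)
      (fun x hx => (hder x hx).deriv) hz (by norm_num)
  have hclosed : IsClosed {x | f x * g' x - f' x * g x = f 0 * g' 0 - f' 0 * g 0} :=
    isClosed_eq (by fun_prop) continuous_const
  have hcl := closure_minimal hsub hclosed
  rw [closure_Ioo (by norm_num)] at hcl
  exact hcl hx

/-- The Wronskian of two entire solutions of the Airy equation is constant. -/
theorem IsAiry.wronskian_eq {v w : ℂ → ℂ} {v0 v0' w0 w0' : ℝ}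
    (hv : IsAiry v v0 v0') (hw : IsAiry w w0 w0') (z : ℂ) :
    v z * deriv w z - deriv v z * w z = v0 * w0' - v0' * w0 := by
  obtain ⟨hv1, hv2, hv3, hv4, hv5⟩ := hv
  obtain ⟨hw1, hw2, hw3, hw4, hw5⟩ := hw
  have hder : ∀ x, HasDerivAt (fun x => v x * deriv w x - deriv v x * w x) 0 x := by
    intro x
    have h := ((hv1 x).hasDerivAt.mul (hw2 x).hasDerivAt).sub
      ((hv2 x).hasDerivAt.mul (hw1 x).hasDerivAt)
    refine h.congr_deriv ?_
    rw [hv3, hw3]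
    ring
  have h := is_const_of_deriv_eq_zero (fun x => (hder x).differentiableAt)
    (fun x => (hder x).deriv) z 0
  simpa only [hv4, hv5, hw4, hw5] using h

/-- The Airy functions `Ai` and `Bi` have nowhere vanishing Wronskian. -/
theorem IsAiryAi.wronskian_ne_zero {Ai Bi : ℂ → ℂ} (hAi : IsAiryAi Ai) (hBi : IsAiryBi Bi)
    (z : ℂ) : Ai z * deriv Bi z - deriv Ai z * Bi z ≠ 0 := by
  rw [IsAiry.wronskian_eq hAi hBi z]
  have h1 : 0 < Real.Gamma (1 / 3) := Real.Gamma_pos_of_pos (by norm_num)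
  have h2 : 0 < Real.Gamma (2 / 3) := Real.Gamma_pos_of_pos (by norm_num)
  norm_cast
  refine ne_of_gt ?_
  rw [neg_div, neg_mul, sub_neg_eq_add]
  positivity

/-- The substitution `ξ = c·(λ - i·x)`: chain rule along this line. -/
theorem hasDerivAt_comp_airyLine {w : ℂ → ℂ} (hw : Differentiable ℂ w) (c lam : ℂ) (x : ℝ) :
    HasDerivAt (fun x : ℝ => w (c * (lam - Complex.I * x)))
      (-(Complex.I * c) * deriv w (c * (lam - Complex.I * x))) x := by
  have hline : HasDerivAt (fun x : ℝ => c * (lam - Complex.I * x)) (-(Complex.I * c)) x := by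
    have h := (((Complex.ofRealCLM.hasDerivAt (x := x)).const_mul Complex.I).const_sub
      lam).const_mul c
    refine h.congr_deriv ?_
    simp
    ring
  refine ((hw _).hasDerivAt.comp x hline).congr_deriv ?_
  ring

/-- Airy functions along the line `c·(λ - i·x)` solve `y'' = -c³·(λ - i·x)·y`. -/
theorem IsAiry.hasDerivAt_deriv_comp_airyLine {w : ℂ → ℂ} {w0 w0' : ℝ} (hw : IsAiry w w0 w0')
    (c lam : ℂ) (x : ℝ) :
    HasDerivAt (fun x : ℝ => -(Complex.I * c) * deriv w (c * (lam - Complex.I * x)))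
      (-(c ^ 3 * (lam - Complex.I * x)) * w (c * (lam - Complex.I * x))) x := by
  refine ((hasDerivAt_comp_airyLine hw.2.1 c lam x).const_mul (-(Complex.I * c))).congr_deriv ?_
  rw [hw.2.2.1]
  linear_combination (c ^ 3 * (lam - Complex.I * x) * w (c * (lam - Complex.I * x))) *
    Complex.I_sq

/-- A homogeneous `2 × 2` system with vanishing determinant has a nontrivial solution. -/
theorem exists_nontrivial_of_det_eq_zero {u₁ v₁ u₂ v₂ : ℂ} (h : u₁ * v₂ - u₂ * v₁ = 0) :
    ∃ a b : ℂ, (a ≠ 0 ∨ b ≠ 0) ∧ a * u₁ + b * v₁ = 0 ∧ a * u₂ + b * v₂ = 0 := by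
  by_cases h₂ : v₂ = 0 ∧ u₂ = 0
  · by_cases h₁ : v₁ = 0 ∧ u₁ = 0
    · exact ⟨1, 0, by simp, by simp [h₁], by simp [h₂]⟩
    · refine ⟨v₁, -u₁, ?_, by ring, by simp [h₂]⟩
      rw [neg_ne_zero]
      exact not_and_or.1 h₁
  · refine ⟨v₂, -u₂, ?_, by linear_combination h, by ring⟩
    rw [neg_ne_zero]
    exact not_and_or.1 h₂

/-- `λ` is an eigenvalue of the model operator `T(ε)` iff `W(ε,λ) = 0`. -/
theorem model_eigenvalue_iff_airyW_eq_zero (Ai Bi : ℂ → ℂ)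
    (hAi : IsAiryAi Ai) (hBi : IsAiryBi Bi)
    (ε : ℝ) (hε : 0 < ε) (lam : ℂ) :
    IsModelEigenvalue ε lam ↔ airyW Ai Bi ε lam = 0 := by
  obtain ⟨c, hc, hW⟩ : ∃ c : ℂ, c ^ 3 = ε ∧ airyW Ai Bi ε lam =
      Ai (c * (lam + Complex.I)) * Bi (c * (lam - Complex.I))
        - Ai (c * (lam - Complex.I)) * Bi (c * (lam + Complex.I)) := by
    refine ⟨((ε ^ ((1 : ℝ) / 3) : ℝ) : ℂ), ?_, rfl⟩
    rw [← Complex.ofReal_pow, ← Real.rpow_natCast, ← Real.rpow_mul hε.le]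
    norm_num
  have hε0 : (ε : ℂ) ≠ 0 := by exact_mod_cast hε.ne'
  have hc0 : c ≠ 0 := by
    rintro rfl
    exact hε0 (by rw [← hc]; simp)
  set u : ℝ → ℂ := fun x => Ai (c * (lam - Complex.I * x)) with hu
  set v : ℝ → ℂ := fun x => Bi (c * (lam - Complex.I * x)) with hv
  set u' : ℝ → ℂ := fun x => -(Complex.I * c) * deriv Ai (c * (lam - Complex.I * x)) with hu'
  set v' : ℝ → ℂ := fun x => -(Complex.I * c) * deriv Bi (c * (lam - Complex.I * x)) with hv'
  have du : ∀ x, HasDerivAt u (u' x) x := hasDerivAt_comp_airyLine hAi.1 c lam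
  have dv : ∀ x, HasDerivAt v (v' x) x := hasDerivAt_comp_airyLine hBi.1 c lam
  have du' : ∀ x : ℝ, HasDerivAt u' (-(c ^ 3 * (lam - Complex.I * x)) * u x) x :=
    IsAiry.hasDerivAt_deriv_comp_airyLine hAi c lam
  have dv' : ∀ x : ℝ, HasDerivAt v' (-(c ^ 3 * (lam - Complex.I * x)) * v x) x :=
    IsAiry.hasDerivAt_deriv_comp_airyLine hBi c lam
  have cu : Continuous u := continuous_iff_continuousAt.2 fun x => (du x).continuousAt
  have cv : Continuous v := continuous_iff_continuousAt.2 fun x => (dv x).continuousAt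
  have cu' : Continuous u' := continuous_iff_continuousAt.2 fun x => (du' x).continuousAt
  have cv' : Continuous v' := continuous_iff_continuousAt.2 fun x => (dv' x).continuousAt
  have hwr : ∀ x, u x * v' x - u' x * v x ≠ 0 := by
    intro x
    have h : u x * v' x - u' x * v x = -(Complex.I * c) *
        (Ai (c * (lam - Complex.I * x)) * deriv Bi (c * (lam - Complex.I * x)) -
          deriv Ai (c * (lam - Complex.I * x)) * Bi (c * (lam - Complex.I * x))) := by
      simp only [hu, hv, hu', hv']
      ring
    rw [h]
    exact mul_ne_zero (neg_ne_zero.2 (mul_ne_zero Complex.I_ne_zero hc0))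
      (IsAiryAi.wronskian_ne_zero hAi hBi _)
  have hWuv : airyW Ai Bi ε lam = u (-1) * v 1 - u 1 * v (-1) := by
    rw [hW]
    simp [hu, hv]
  rw [hWuv]
  constructor
  · rintro ⟨y, hy, ⟨x, hx, hyx⟩, hode, hy1, hy2⟩
    have hy' : ContDiff ℝ 1 (deriv y) := ContDiff.deriv' hy
    have dy : ∀ x, HasDerivAt y (deriv y x) x := fun x =>
      (hy.differentiable (by norm_num) x).hasDerivAt
    have dy' : ∀ x ∈ Set.Ioo (-1 : ℝ) 1,
        HasDerivAt (deriv y) (-(c ^ 3 * (lam - Complex.I * x)) * y x) x := by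
      intro x hx
      refine (hy'.differentiable (by norm_num) x).hasDerivAt.congr_deriv ?_
      have h := hode x hx
      rw [hc]
      field_simp at h
      linear_combination -h
    have hP := fun {x : ℝ} (hx : x ∈ Set.Icc (-1 : ℝ) 1) => wronskian_eq_of_mem_Icc dy dv dy'
      (fun x _ => dv' x) hy'.continuous cv' hx
    have hQ := fun {x : ℝ} (hx : x ∈ Set.Icc (-1 : ℝ) 1) => wronskian_eq_of_mem_Icc dy du dy'
      (fun x _ => du' x) hy'.continuous cu' hx
    set P := y 0 * v' 0 - deriv y 0 * v 0
    set Q := y 0 * u' 0 - deriv y 0 * u 0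
    have hrep : ∀ x ∈ Set.Icc (-1 : ℝ) 1,
        P * u x - Q * v x = y x * (u x * v' x - u' x * v x) := by
      intro x hx
      linear_combination -u x * hP hx + v x * hQ hx
    have h1 := hrep (-1) (by norm_num)
    have h2 := hrep 1 (by norm_num)
    rw [hy1, zero_mul] at h1
    rw [hy2, zero_mul] at h2
    have hPW : P * (u (-1) * v 1 - u 1 * v (-1)) = 0 := by
      linear_combination v 1 * h1 - v (-1) * h2
    have hQW : Q * (u (-1) * v 1 - u 1 * v (-1)) = 0 := by
      linear_combination u 1 * h1 - u (-1) * h2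
    by_contra hne
    have hP0 := (mul_eq_zero.1 hPW).resolve_right hne
    have hQ0 := (mul_eq_zero.1 hQW).resolve_right hne
    have h := hrep x hx
    rw [hP0, hQ0, zero_mul, zero_mul, sub_zero] at h
    exact mul_ne_zero hyx (hwr x) h.symm
  · intro h
    obtain ⟨a, b, hab, h1, h2⟩ := exists_nontrivial_of_det_eq_zero h
    have dy : ∀ x, HasDerivAt (fun x => a * u x + b * v x) (a * u' x + b * v' x) x := fun x =>
      ((du x).const_mul a).add ((dv x).const_mul b)
    have dy' : ∀ x : ℝ, HasDerivAt (fun x => a * u' x + b * v' x)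
        (-(c ^ 3 * (lam - Complex.I * x)) * (a * u x + b * v x)) x := fun x =>
      (((du' x).const_mul a).add ((dv' x).const_mul b)).congr_deriv (by ring)
    have hd : deriv (fun x => a * u x + b * v x) = fun x => a * u' x + b * v' x :=
      funext fun x => (dy x).deriv
    have hd' : deriv (fun x => a * u' x + b * v' x) =
        fun x : ℝ => -(c ^ 3 * (lam - Complex.I * x)) * (a * u x + b * v x) :=
      funext fun x => (dy' x).deriv
    refine ⟨fun x => a * u x + b * v x, ?_, ?_, ?_, h1, h2⟩
    · have h1 : ContDiff ℝ 1 (fun x => a * u' x + b * v' x) :=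
        contDiff_one_iff_deriv.2 ⟨fun x => (dy' x).differentiableAt, by rw [hd']; fun_prop⟩
      exact (contDiff_succ_iff_deriv (n := 1)).2
        ⟨fun x => (dy x).differentiableAt, by simp, by rwa [hd]⟩
    · by_contra! hzero
      have h0 : a * u 0 + b * v 0 = 0 := hzero 0 (by norm_num)
      have h0' : a * u' 0 + b * v' 0 = 0 := by
        rw [← (dy 0).deriv]
        have hev : (fun x => a * u x + b * v x) =ᶠ[nhds 0] fun _ => 0 := by
          filter_upwards [Icc_mem_nhds (show (-1 : ℝ) < 0 by norm_num) one_pos] with x hx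
          exact hzero x hx
        rw [hev.deriv_eq, deriv_const]
      have ha : a * (u 0 * v' 0 - u' 0 * v 0) = 0 := by
        linear_combination v' 0 * h0 - v 0 * h0'
      have hb : b * (u 0 * v' 0 - u' 0 * v 0) = 0 := by
        linear_combination u 0 * h0' - u' 0 * h0
      exact hab.elim (fun h => h ((mul_eq_zero.1 ha).resolve_right (hwr 0)))
        fun h => h ((mul_eq_zero.1 hb).resolve_right (hwr 0))
    · intro x _
      rw [hd, hd', hc]
      field_simp
      ring
end
end

section
/- Every zero of U₊ lies on one of the three rays arg z = π/3, arg z = π, arg z = −π/3, and every zero of U₋ is either z = 0 or lies on one of these three rays. Moreover the zero sets of U₋ and of U₊ are each invariant under complex conjugation z ↦ conj(z). -/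
open Complex MeasureTheory Real

noncomputable section

/-- `U₋ = -√3·Ai + Bi`. -/
def Uminus (Ai Bi : ℂ → ℂ) : ℂ → ℂ := fun z => -(Real.sqrt 3 : ℂ) * Ai z + Bi z

/-- `U₊ = √3·Ai + Bi`. -/
def Uplus (Ai Bi : ℂ → ℂ) : ℂ → ℂ := fun z => (Real.sqrt 3 : ℂ) * Ai z + Bi z

/-- The moduli of the zeros of `U` on the open ray `arg z = π/3`. -/
def rayZeroModuli (U : ℂ → ℂ) : Set ℝ :=
  {r : ℝ | 0 < r ∧ U ((r : ℂ) * Complex.exp ((π/3 : ℝ) * Complex.I)) = 0}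

open Set in
/-- A complex number whose cube is a negative real lies on one of the rays `arg z = π/3, π, -π/3`. -/
lemma arg_of_cube_neg {z : ℂ} (him : (z ^ 3).im = 0) (hre : (z ^ 3).re < 0) :
    z.arg = π/3 ∨ z.arg = π ∨ z.arg = -(π/3) := by
  obtain ⟨x, y⟩ := z
  simp only [pow_succ, pow_zero, one_mul, mul_im, mul_re] at him hre
  have h3 : √3 ^ 2 = 3 := Real.sq_sqrt (by norm_num)
  have h1 : y * (√3 * x - y) * (√3 * x + y) = 0 := by
    linear_combination him + y * x ^ 2 * h3
  have key : ∀ θ : ℝ, θ ∈ Ioc (-π) π → 0 < x → Real.cos θ = 1 / 2 → y = 2 * x * Real.sin θ →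
      (⟨x, y⟩ : ℂ).arg = θ := by
    intro θ hθ hx hc hy
    rw [← arg_mul_cos_add_sin_mul_I (r := 2 * x) (by positivity) hθ]
    congr 1
    apply Complex.ext
    · simp [← ofReal_cos, ← ofReal_sin, hc]
      ring
    · simp [← ofReal_cos, ← ofReal_sin, hy]
  have hpos : y ^ 2 = 3 * x ^ 2 → 0 < x := by
    intro h
    have : 0 < 8 * x ^ 3 := by linear_combination hre + 3 * x * h
    by_contra! hx
    nlinarith [pow_nonneg (neg_nonneg.2 hx) 3]
  have hπ := Real.pi_pos
  rcases mul_eq_zero.1 h1 with h | h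
  · rcases mul_eq_zero.1 h with rfl | h
    · right; left
      rw [arg_eq_pi_iff]
      refine ⟨?_, rfl⟩
      by_contra! hx
      nlinarith [pow_nonneg hx 3]
    · left
      have hy : y = √3 * x := by linarith
      refine key _ ⟨by linarith, by linarith⟩ (hpos ?_) Real.cos_pi_div_three ?_
      · rw [hy, mul_pow, h3]
      · rw [Real.sin_pi_div_three, hy]; ring
  · right; right
    have hy : y = -(√3 * x) := by linarith
    refine key _ ⟨by linarith, by linarith⟩ (hpos ?_) ?_ ?_
    · rw [hy, neg_sq, mul_pow, h3]
    · rw [Real.cos_neg, Real.cos_pi_div_three]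
    · rw [Real.sin_neg, Real.sin_pi_div_three, hy]; ring

namespace IsAiry

variable {u v : ℂ → ℂ} {a a' b b' : ℝ}

lemma const_mul_add (hu : IsAiry u a a') (hv : IsAiry v b b') (c : ℝ) :
    IsAiry (fun z => (c : ℂ) * u z + v z) (c * a + b) (c * a' + b') := by
  obtain ⟨u1, u2, u3, u4, u5⟩ := hu
  obtain ⟨v1, v2, v3, v4, v5⟩ := hv
  have hd : deriv (fun z => (c : ℂ) * u z + v z) = fun z => (c : ℂ) * deriv u z + deriv v z :=
    funext fun z => (((u1 z).hasDerivAt.const_mul _).add (v1 z).hasDerivAt).deriv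
  have hdd (z : ℂ) : HasDerivAt (fun z => (c : ℂ) * deriv u z + deriv v z)
      ((c : ℂ) * (z * u z) + z * v z) z := by
    rw [← u3, ← v3]
    exact ((u2 z).hasDerivAt.const_mul _).add (v2 z).hasDerivAt
  refine ⟨(u1.const_mul _).add v1, ?_, fun z => ?_, ?_, ?_⟩
  · rw [hd]
    exact fun z => (hdd z).differentiableAt
  · rw [hd, (hdd z).deriv]
    ring
  · simp [u4, v4]
  · simp [hd, u5, v5]

lemma hasDerivAt_ray (hu : IsAiry u a a') (z : ℂ) (t : ℝ) :
    HasDerivAt (fun t : ℝ => u (t * z)) (z * deriv u (t * z)) t := by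
  have h : HasDerivAt (fun s : ℂ => s * z) z (t : ℂ) := by
    simpa using (hasDerivAt_id (t : ℂ)).mul_const z
  have := ((hu.1 (t * z)).hasDerivAt.comp (t : ℂ) h).comp_ofReal
  rwa [mul_comm] at this

lemma hasDerivAt_deriv_ray (hu : IsAiry u a a') (z : ℂ) (t : ℝ) :
    HasDerivAt (fun t : ℝ => z * deriv u (t * z)) (t * z ^ 3 * u (t * z)) t := by
  have h : HasDerivAt (fun s : ℂ => s * z) z (t : ℂ) := by
    simpa using (hasDerivAt_id (t : ℂ)).mul_const z
  have := ((hu.2.1 (t * z)).hasDerivAt.comp (t : ℂ) h).comp_ofReal.const_mul z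
  refine this.congr_deriv ?_
  rw [hu.2.2.1]
  ring

/-- A solution of the Airy equation with zero initial data vanishes identically. -/
lemma eq_zero (hu : IsAiry u 0 0) : u = 0 := by
  funext z
  have key := norm_le_gronwallBound_of_norm_deriv_right_le
    (f := fun t : ℝ => (u (t * z), z * deriv u (t * z)))
    (f' := fun t : ℝ => (z * deriv u (t * z), t * z ^ 3 * u (t * z)))
    (δ := 0) (K := 1 + ‖z‖ ^ 3) (ε := 0) (a := 0) (b := 1)
    (fun t _ => ((hu.hasDerivAt_ray z t).prodMk
      (hu.hasDerivAt_deriv_ray z t)).continuousAt.continuousWithinAt)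
    (fun t _ => ((hu.hasDerivAt_ray z t).prodMk
      (hu.hasDerivAt_deriv_ray z t)).hasDerivWithinAt)
    (by simp [hu.2.2.2.1, hu.2.2.2.2])
    (fun t ht => by
      rw [add_zero, Prod.norm_def, Prod.norm_def]
      set M := max ‖u (t * z)‖ ‖z * deriv u (t * z)‖
      have h1 : ‖u (t * z)‖ ≤ M := le_max_left _ _
      have h2 : ‖z * deriv u (t * z)‖ ≤ M := le_max_right _ _
      have hM : 0 ≤ M := (norm_nonneg _).trans h1
      have hz : 0 ≤ ‖z‖ ^ 3 := by positivity
      refine max_le (by nlinarith) ?_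
      simp only [norm_mul, norm_pow, norm_real, Real.norm_eq_abs, abs_of_nonneg ht.1]
      have h4 : t * ‖z‖ ^ 3 ≤ ‖z‖ ^ 3 := mul_le_of_le_one_left hz ht.2.le
      calc t * ‖z‖ ^ 3 * ‖u (t * z)‖ ≤ ‖z‖ ^ 3 * M := by gcongr
        _ ≤ (1 + ‖z‖ ^ 3) * M := by nlinarith)
    1 (by simp)
  simp only [gronwallBound_ε0_δ0, norm_le_zero_iff, Prod.mk_eq_zero, ofReal_one, one_mul] at key
  exact key.1

open ComplexConjugate in
lemma conj_conj (hu : IsAiry u a a') : IsAiry (conj ∘ u ∘ conj) a a' := by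
  obtain ⟨u1, u2, u3, u4, u5⟩ := hu
  have h1 (z : ℂ) : HasDerivAt (conj ∘ u ∘ conj) ((conj ∘ deriv u ∘ conj) z) z := by
    simpa using (u1 (conj z)).hasDerivAt.conj_conj
  have h2 (z : ℂ) : HasDerivAt (conj ∘ deriv u ∘ conj) (z * (conj ∘ u ∘ conj) z) z := by
    simpa [u3] using (u2 (conj z)).hasDerivAt.conj_conj
  have hd : deriv (conj ∘ u ∘ conj) = conj ∘ deriv u ∘ conj := funext fun z => (h1 z).deriv
  refine ⟨fun z => (h1 z).differentiableAt, ?_, fun z => ?_, ?_, ?_⟩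
  · rw [hd]
    exact fun z => (h2 z).differentiableAt
  · rw [hd, (h2 z).deriv]
  · simp [u4]
  · simp [hd, u5]

open ComplexConjugate in
lemma apply_conj (hu : IsAiry u a a') (z : ℂ) : u (conj z) = conj (u z) := by
  have h := hu.const_mul_add hu.conj_conj (-1)
  rw [neg_one_mul, neg_one_mul, neg_add_cancel, neg_add_cancel] at h
  have := congrFun h.eq_zero (conj z)
  simp only [Function.comp_apply, RingHomCompTriple.comp_apply, RingHom.id_apply,
    Pi.zero_apply, ofReal_neg, ofReal_one] at this
  linear_combination -this

open ComplexConjugate in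
lemma apply_conj_eq_zero_iff (hu : IsAiry u a a') (z : ℂ) : u z = 0 ↔ u (conj z) = 0 := by
  rw [hu.apply_conj, map_eq_zero]

open ComplexConjugate in
/-- The energy identity along the segment from the origin to a zero `z`. -/
lemma energy_identity (hu : IsAiry u a a') (haa' : a * a' = 0) {z : ℂ} (hz : u z = 0) :
    ((∫ t in (0 : ℝ)..1, ‖z * deriv u (t * z)‖ ^ 2 : ℝ) : ℂ) +
      z ^ 3 * (∫ t in (0 : ℝ)..1, t * ‖u (t * z)‖ ^ 2 : ℝ) = 0 := by
  have hcu : Continuous fun t : ℝ => u (t * z) :=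
    continuous_iff_continuousAt.2 fun t => (hu.hasDerivAt_ray z t).continuousAt
  have hcd : Continuous fun t : ℝ => z * deriv u (t * z) :=
    continuous_iff_continuousAt.2 fun t => (hu.hasDerivAt_deriv_ray z t).continuousAt
  have hderiv (t : ℝ) : HasDerivAt (fun t : ℝ => z * deriv u (t * z) * conj (u (t * z)))
      (((‖z * deriv u (t * z)‖ ^ 2 : ℝ) : ℂ) + z ^ 3 * (t * ‖u (t * z)‖ ^ 2 : ℝ)) t := by
    refine ((hu.hasDerivAt_deriv_ray z t).mul (hu.hasDerivAt_ray z t).star).congr_deriv ?_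
    push_cast
    rw [← mul_conj', ← mul_conj']
    simp only [star_def]
    ring
  have hc1 : Continuous fun t : ℝ => ((‖z * deriv u (t * z)‖ ^ 2 : ℝ) : ℂ) := by fun_prop
  have hc2 : Continuous fun t : ℝ => ((t * ‖u (t * z)‖ ^ 2 : ℝ) : ℂ) :=
    continuous_ofReal.comp (continuous_id.mul (hcu.norm.pow 2))
  have h := intervalIntegral.integral_eq_sub_of_hasDerivAt (a := 0) (b := 1)
    (fun t _ => hderiv t) ((hc1.add (hc2.const_mul (z ^ 3))).intervalIntegrable _ _)
  rw [intervalIntegral.integral_add (hc1.intervalIntegrable _ _)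
    ((hc2.const_mul (z ^ 3)).intervalIntegrable _ _), intervalIntegral.integral_const_mul,
    intervalIntegral.integral_ofReal, intervalIntegral.integral_ofReal] at h
  rw [h]
  have : (a' : ℂ) * a = 0 := by exact_mod_cast (mul_comm a' a).trans haa'
  simp [hz, hu.2.2.2.1, hu.2.2.2.2, mul_assoc, this]

/-- A solution with nonzero initial data is not identically zero on any segment
issuing from the origin. -/
lemma integral_ray_pos (hu : IsAiry u a a') (hne : a ≠ 0 ∨ a' ≠ 0) {z : ℂ} (hz : z ≠ 0) :
    0 < ∫ t in (0 : ℝ)..1, t * ‖u (t * z)‖ ^ 2 := by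
  have hcu : Continuous fun t : ℝ => u (t * z) :=
    continuous_iff_continuousAt.2 fun t => (hu.hasDerivAt_ray z t).continuousAt
  obtain ⟨s, hs, hus⟩ : ∃ s ∈ Set.Ioo (0 : ℝ) 1, u (s * z) ≠ 0 := by
    by_contra! h
    have h0 : (fun t : ℝ => u (t * z)) =ᶠ[nhdsWithin 0 (Set.Ioi 0)] fun _ => 0 := by
      filter_upwards [Ioo_mem_nhdsGT (zero_lt_one' ℝ)] with t ht using h t ht
    have hu0 : u ((0 : ℝ) * z) = 0 := tendsto_nhds_unique
      ((hcu.tendsto 0).mono_left nhdsWithin_le_nhds) (tendsto_const_nhds.congr' h0.symm)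
    have hd0 : z * deriv u ((0 : ℝ) * z) = 0 :=
      (uniqueDiffWithinAt_Ioi (0 : ℝ)).eq_deriv _ (hu.hasDerivAt_ray z 0).hasDerivWithinAt
        ((hasDerivWithinAt_const _ _ (0 : ℂ)).congr_of_eventuallyEq h0 hu0)
    simp [hu.2.2.2.1, hu.2.2.2.2, hz] at hu0 hd0
    tauto
  refine intervalIntegral.integral_pos zero_lt_one
    (continuous_id.mul (hcu.norm.pow 2)).continuousOn
    (fun t ht => mul_nonneg ht.1.le (by positivity)) ⟨s, Set.Ioo_subset_Icc_self hs, ?_⟩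
  exact mul_pos hs.1 (by positivity)

/-- Nonzero zeros of a nontrivial real solution with `w 0 = 0` or `w' 0 = 0` lie on the rays
`arg z = π/3, π, -π/3`. -/
lemma arg_of_zero (hu : IsAiry u a a') (haa' : a * a' = 0) (hne : a ≠ 0 ∨ a' ≠ 0) {z : ℂ}
    (hz : z ≠ 0) (huz : u z = 0) : z.arg = π/3 ∨ z.arg = π ∨ z.arg = -(π/3) := by
  have hB := hu.integral_ray_pos hne hz
  have hA : 0 ≤ ∫ t in (0 : ℝ)..1, ‖z * deriv u (t * z)‖ ^ 2 :=
    intervalIntegral.integral_nonneg zero_le_one fun t _ => by positivity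
  have h := hu.energy_identity haa' huz
  set B := ∫ t in (0 : ℝ)..1, t * ‖u (t * z)‖ ^ 2
  set A := ∫ t in (0 : ℝ)..1, ‖z * deriv u (t * z)‖ ^ 2
  have hre : A + (z ^ 3).re * B = 0 := by simpa using congrArg Complex.re h
  have him : (z ^ 3).im = 0 := by simpa [hB.ne'] using congrArg Complex.im h
  refine arg_of_cube_neg him (lt_of_le_of_ne (by nlinarith) fun h0 => hz ?_)
  exact pow_eq_zero_iff three_ne_zero |>.1 (Complex.ext h0 him)

end IsAiry

lemma sqrt_three_mul_rpow_neg_two_thirds :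
    √3 * (3 : ℝ) ^ (-(2 : ℝ)/3) = (3 : ℝ) ^ (-(1 : ℝ)/6) := by
  rw [Real.sqrt_eq_rpow, ← Real.rpow_add (by norm_num)]
  norm_num

lemma sqrt_three_mul_rpow_neg_one_third :
    √3 * (3 : ℝ) ^ (-(1 : ℝ)/3) = (3 : ℝ) ^ ((1 : ℝ)/6) := by
  rw [Real.sqrt_eq_rpow, ← Real.rpow_add (by norm_num)]
  norm_num

lemma isAiry_Uplus {Ai Bi : ℂ → ℂ} (hAi : IsAiryAi Ai) (hBi : IsAiryBi Bi) :
    IsAiry (Uplus Ai Bi) (2 * ((3 : ℝ) ^ (-(1 : ℝ)/6) / Real.Gamma (2/3))) 0 := by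
  convert hAi.const_mul_add hBi √3 using 1
  · rfl
  · rw [← sqrt_three_mul_rpow_neg_two_thirds]
    ring
  · rw [← sqrt_three_mul_rpow_neg_one_third]
    ring

lemma isAiry_Uminus {Ai Bi : ℂ → ℂ} (hAi : IsAiryAi Ai) (hBi : IsAiryBi Bi) :
    IsAiry (Uminus Ai Bi) 0 (2 * ((3 : ℝ) ^ ((1 : ℝ)/6) / Real.Gamma (1/3))) := by
  convert hAi.const_mul_add hBi (-√3) using 1
  · funext z
    simp [Uminus]
  · rw [← sqrt_three_mul_rpow_neg_two_thirds]
    ring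
  · rw [← sqrt_three_mul_rpow_neg_one_third]
    ring

/-- Every zero of `U₊` lies on one of the rays `arg z = π/3, π, -π/3`; every zero of `U₋`
is either `0` or lies on one of these rays; both zero sets are invariant under conjugation. -/
theorem zeros_of_Uminus_Uplus_on_rays (Ai Bi : ℂ → ℂ)
    (hAi : IsAiryAi Ai) (hBi : IsAiryBi Bi) :
    (∀ z : ℂ, Uplus Ai Bi z = 0 →
      (z.arg = π/3 ∨ z.arg = π ∨ z.arg = -(π/3))) ∧
    (∀ z : ℂ, Uminus Ai Bi z = 0 →
      (z = 0 ∨ z.arg = π/3 ∨ z.arg = π ∨ z.arg = -(π/3))) ∧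
    (∀ z : ℂ, Uminus Ai Bi z = 0 ↔ Uminus Ai Bi ((starRingEnd ℂ) z) = 0) ∧
    (∀ z : ℂ, Uplus Ai Bi z = 0 ↔ Uplus Ai Bi ((starRingEnd ℂ) z) = 0) := by
  have hp := isAiry_Uplus hAi hBi
  have hm := isAiry_Uminus hAi hBi
  have hp0 : 2 * ((3 : ℝ) ^ (-(1 : ℝ)/6) / Real.Gamma (2/3)) ≠ 0 := by positivity
  have hm0 : 2 * ((3 : ℝ) ^ ((1 : ℝ)/6) / Real.Gamma (1/3)) ≠ 0 := by positivity
  refine ⟨fun z hz => ?_, fun z hz => ?_, hm.apply_conj_eq_zero_iff, hp.apply_conj_eq_zero_iff⟩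
  · refine hp.arg_of_zero (mul_zero _) (Or.inl hp0) ?_ hz
    rintro rfl
    exact hp0 (ofReal_eq_zero.1 (hp.2.2.2.1.symm.trans hz))
  · exact or_iff_not_imp_left.2 fun h0 => hm.arg_of_zero (zero_mul _) (Or.inr hm0) h0 hz
end
end

section
/- Let ε₁ = (√3·α₁/2)³, where α₁ is the smallest modulus of a zero of U₋ on the open ray arg z = π/3. For every ε with 0 < ε < ε₁, every zero λ of the entire function λ ↦ W(ε,λ) is real and is a simple zero, i.e. the derivative ∂W/∂λ(ε,λ) is nonzero there. (Equivalently: for 0 < ε < ε₁ all eigenvalues of the model operator T(ε) are real and simple.) -/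
open Complex MeasureTheory Real

noncomputable section

/-- `w` is an entire solution of the Airy equation with derivative `w'`. -/
structure AirySol (w w' : ℂ → ℂ) : Prop where
  hasDerivAt : ∀ z, HasDerivAt w (w' z) z
  hasDerivAt' : ∀ z, HasDerivAt w' (z * w z) z

/-- The fundamental system of the Airy equation normalised at the origin. -/
structure AiryPair (f f' g g' : ℂ → ℂ) : Prop where
  left : AirySol f f'
  right : AirySol g g'
  f_zero : f 0 = 0
  f'_zero : f' 0 = 1
  g_zero : g 0 = 1
  g'_zero : g' 0 = 0

namespace AirySol

variable {w w' v v' : ℂ → ℂ}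

theorem wronskian_eq (hw : AirySol w w') (hv : AirySol v v') (z y : ℂ) :
    w' z * v z - w z * v' z = w' y * v y - w y * v' y := by
  have key : ∀ z, HasDerivAt (fun z => w' z * v z - w z * v' z) 0 z := fun z => by
    have := ((hw.hasDerivAt' z).mul (hv.hasDerivAt z)).sub
      ((hw.hasDerivAt z).mul (hv.hasDerivAt' z))
    exact this.congr_deriv (by ring)
  exact is_const_of_deriv_eq_zero (fun z => (key z).differentiableAt)
    (fun z => (key z).deriv) z y

theorem conj (hw : AirySol w w') :
    AirySol (fun z => (starRingEnd ℂ) (w ((starRingEnd ℂ) z)))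
      (fun z => (starRingEnd ℂ) (w' ((starRingEnd ℂ) z))) := by
  refine ⟨fun z => ?_, fun z => ?_⟩
  · have := (hw.hasDerivAt ((starRingEnd ℂ) z)).conj_conj
    simpa [Function.comp_def] using this
  · have := (hw.hasDerivAt' ((starRingEnd ℂ) z)).conj_conj
    simpa [Function.comp_def] using this

theorem add_smul (hw : AirySol w w') (hv : AirySol v v') (a b : ℂ) :
    AirySol (fun z => a * w z + b * v z) (fun z => a * w' z + b * v' z) := by
  refine ⟨fun z => ((hw.hasDerivAt z).const_mul a).add ((hv.hasDerivAt z).const_mul b),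
    fun z => ?_⟩
  exact (((hw.hasDerivAt' z).const_mul a).add ((hv.hasDerivAt' z).const_mul b)).congr_deriv
    (by ring)

theorem rotate (hw : AirySol w w') {ω : ℂ} (hω : ω ^ 3 = 1) :
    AirySol (fun z => w (ω * z)) (fun z => ω * w' (ω * z)) := by
  have hl : ∀ z : ℂ, HasDerivAt (fun z => ω * z) ω z := fun z => by
    simpa using (hasDerivAt_id z).const_mul ω
  refine ⟨fun z => ?_, fun z => ?_⟩
  · exact ((hw.hasDerivAt (ω * z)).comp z (hl z)).congr_deriv (by ring)
  · exact (((hw.hasDerivAt' (ω * z)).comp z (hl z)).const_mul ω).congr_deriv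
      (by linear_combination (z * w (ω * z)) * hω)

end AirySol

namespace AiryPair

variable {f f' g g' w w' : ℂ → ℂ}

theorem wronskian (h : AiryPair f f' g g') (z : ℂ) : f' z * g z - f z * g' z = 1 := by
  rw [h.left.wronskian_eq h.right z 0, h.f_zero, h.f'_zero, h.g_zero, h.g'_zero]
  ring

theorem eq_combination (h : AiryPair f f' g g') (hw : AirySol w w') (z : ℂ) :
    w z = w' 0 * f z + w 0 * g z := by
  have h1 := hw.wronskian_eq h.left z 0
  have h2 := hw.wronskian_eq h.right z 0
  have h3 := h.wronskian z
  rw [h.f_zero, h.f'_zero] at h1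
  rw [h.g_zero, h.g'_zero] at h2
  linear_combination (-(w z)) * h3 - g z * h1 + f z * h2

theorem eq_combination' (h : AiryPair f f' g g') (hw : AirySol w w') (z : ℂ) :
    w' z = w' 0 * f' z + w 0 * g' z := by
  have h1 := hw.wronskian_eq h.left z 0
  have h2 := hw.wronskian_eq h.right z 0
  have h3 := h.wronskian z
  rw [h.f_zero, h.f'_zero] at h1
  rw [h.g_zero, h.g'_zero] at h2
  linear_combination (-(w' z)) * h3 - g' z * h1 + f' z * h2

theorem f_conj (h : AiryPair f f' g g') (z : ℂ) :
    f ((starRingEnd ℂ) z) = (starRingEnd ℂ) (f z) := by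
  have := h.eq_combination h.left.conj ((starRingEnd ℂ) z)
  simp [h.f_zero, h.f'_zero] at this
  exact this.symm

theorem f'_conj (h : AiryPair f f' g g') (z : ℂ) :
    f' ((starRingEnd ℂ) z) = (starRingEnd ℂ) (f' z) := by
  have := h.eq_combination' h.left.conj ((starRingEnd ℂ) z)
  simp [h.f_zero, h.f'_zero] at this
  exact this.symm

theorem g_conj (h : AiryPair f f' g g') (z : ℂ) :
    g ((starRingEnd ℂ) z) = (starRingEnd ℂ) (g z) := by
  have := h.eq_combination h.right.conj ((starRingEnd ℂ) z)
  simp [h.g_zero, h.g'_zero] at this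
  exact this.symm

theorem g'_conj (h : AiryPair f f' g g') (z : ℂ) :
    g' ((starRingEnd ℂ) z) = (starRingEnd ℂ) (g' z) := by
  have := h.eq_combination' h.right.conj ((starRingEnd ℂ) z)
  simp [h.g_zero, h.g'_zero] at this
  exact this.symm

theorem f_rotate (h : AiryPair f f' g g') {ω : ℂ} (hω : ω ^ 3 = 1) (z : ℂ) :
    f (ω * z) = ω * f z := by
  have := h.eq_combination (h.left.rotate hω) z
  simpa [h.f_zero, h.f'_zero] using this

/-- Along the ray spanned by a primitive sixth root of unity `e`, `f` is a real multiple of `e`. -/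
theorem f_ray (h : AiryPair f f' g g') {e : ℂ} (he : e * (starRingEnd ℂ) e = 1)
    (he3 : e ^ 3 = -1) (t : ℝ) :
    ((f (t * e) * (starRingEnd ℂ) e).re : ℂ) = f (t * e) * (starRingEnd ℂ) e := by
  have h6 : (e ^ 2) ^ 3 = 1 := by rw [← pow_mul, mul_comm, pow_mul, he3]; norm_num
  have h1 := h.f_rotate h6 (t * (starRingEnd ℂ) e)
  have h2 : e ^ 2 * (t * (starRingEnd ℂ) e) = t * e := by linear_combination (t * e) * he
  have h3 : (t : ℂ) * (starRingEnd ℂ) e = (starRingEnd ℂ) (t * e) := by simp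
  rw [h2, h3, h.f_conj] at h1
  rw [← Complex.conj_eq_iff_re, map_mul, Complex.conj_conj]
  linear_combination ((starRingEnd ℂ) e) * (-h1) - (starRingEnd ℂ) (f (t * e)) * e * he

end AiryPair

/-- The entire functions `∑ (-u)^k / (k! (k+m)!)`, i.e. `u^{-m/2} J_m(2√u)` for the Bessel
functions `J_m`. -/
def besselSeries (m : ℕ) (u : ℂ) : ℂ := ∑' k : ℕ, (-u) ^ k / (k.factorial * (k + m).factorial)

theorem summable_besselSeries (m : ℕ) (u : ℂ) :
    Summable fun k : ℕ => (-u) ^ k / ((k.factorial : ℂ) * (k + m).factorial) := by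
  refine Summable.of_norm_bounded (Real.summable_pow_div_factorial ‖u‖) fun k => ?_
  rw [norm_div, norm_mul, norm_pow, norm_neg, Complex.norm_natCast, Complex.norm_natCast]
  gcongr
  have : (1 : ℝ) ≤ (k + m).factorial := by exact_mod_cast Nat.one_le_iff_ne_zero.2 (Nat.factorial_ne_zero _)
  exact le_mul_of_one_le_right (by positivity) this

theorem hasDerivAt_besselSeries (m : ℕ) (u : ℂ) :
    HasDerivAt (besselSeries m) (-besselSeries (m + 1) u) u := by
  set R : ℝ := ‖u‖ + 1
  have hR : 0 ≤ R := by positivity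
  have hsum : Summable fun k : ℕ => (k : ℝ) * R ^ (k - 1) / k.factorial := by
    rw [← summable_nat_add_iff 1]
    refine (Real.summable_pow_div_factorial R).congr fun k => ?_
    rw [Nat.factorial_succ, Nat.add_sub_cancel]
    push_cast
    have : (k.factorial : ℝ) ≠ 0 := by positivity
    field_simp
  have key := hasDerivAt_tsum_of_isPreconnected (𝕜 := ℂ)
    (g := fun (k : ℕ) (y : ℂ) => (-y) ^ k / ((k.factorial : ℂ) * (k + m).factorial))
    (g' := fun (k : ℕ) (y : ℂ) => (k * (-y) ^ (k - 1) * (-1)) /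
      ((k.factorial : ℂ) * (k + m).factorial)) (y₀ := 0) (y := u) (t := Metric.ball 0 R)
    hsum Metric.isOpen_ball (convex_ball 0 R).isPreconnected
    (fun k y _ => (((hasDerivAt_id y).neg.pow k)).div_const _)
    (fun k y hy => by
      rw [norm_div, norm_mul, norm_mul, norm_mul, norm_pow, norm_neg, Complex.norm_natCast,
        Complex.norm_natCast, Complex.norm_natCast, norm_neg, norm_one, mul_one]
      have hy' : ‖y‖ ≤ R := by simpa using (Metric.mem_ball.1 hy).le
      have : (1 : ℝ) ≤ (k + m).factorial := by
        exact_mod_cast Nat.one_le_iff_ne_zero.2 (Nat.factorial_ne_zero _)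
      gcongr
      exact le_mul_of_one_le_right (by positivity) this)
    (by simp [R]; positivity) (summable_besselSeries m 0) (by simp [R])
  refine key.congr_deriv ?_
  have hs : Summable fun k : ℕ => ((k : ℂ) * (-u) ^ (k - 1) * (-1)) /
      ((k.factorial : ℂ) * (k + m).factorial) := by
    rw [← summable_nat_add_iff 1]
    refine (summable_besselSeries (m + 1) u).neg.congr fun k => ?_
    rw [Nat.factorial_succ, Nat.add_sub_cancel, show k + 1 + m = k + (m + 1) by ring]
    push_cast
    have : (k.factorial : ℂ) ≠ 0 := by exact_mod_cast Nat.factorial_ne_zero _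
    have : ((k : ℂ) + 1) ≠ 0 := by exact_mod_cast Nat.succ_ne_zero k
    field_simp
  rw [hs.tsum_eq_zero_add]
  simp only [Nat.cast_zero, zero_mul, zero_div, zero_add, besselSeries, ← tsum_neg]
  refine tsum_congr fun k => ?_
  rw [Nat.factorial_succ, Nat.add_sub_cancel, show k + 1 + m = k + (m + 1) by ring]
  push_cast
  have : (k.factorial : ℂ) ≠ 0 := by exact_mod_cast Nat.factorial_ne_zero _
  have : ((k : ℂ) + 1) ≠ 0 := by exact_mod_cast Nat.succ_ne_zero k
  field_simp

theorem continuous_besselSeries (m : ℕ) : Continuous (besselSeries m) :=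
  continuous_iff_continuousAt.2 fun u => (hasDerivAt_besselSeries m u).continuousAt

theorem besselSeries_zero_right (m : ℕ) : besselSeries m 0 = 1 / m.factorial := by
  rw [besselSeries, tsum_eq_single 0 (fun k hk => by simp [hk])]
  simp

/-- The three-term recurrence of the Bessel functions. -/
theorem besselSeries_recurrence (u : ℂ) :
    besselSeries 0 u - besselSeries 1 u + u * besselSeries 2 u = 0 := by
  have h0 := (summable_besselSeries 0 u)
  have h1 := (summable_besselSeries 1 u)
  have h2 := (summable_besselSeries 2 u)
  unfold besselSeries
  rw [h0.tsum_eq_zero_add, h1.tsum_eq_zero_add, ← tsum_mul_left]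
  have h0' := (summable_nat_add_iff 1).2 h0
  have h1' := (summable_nat_add_iff 1).2 h1
  have e : ∀ a b c d : ℂ, a = b → a + c - (b + d) = c - d := by intros; subst_vars; ring
  rw [e _ _ _ _ (by simp), ← h0'.tsum_sub h1', ← (h0'.sub h1').tsum_add (h2.mul_left u)]
  refine (tsum_congr fun k => ?_).trans tsum_zero
  rw [show k + 1 + 0 = k + 1 by ring, show k + 1 + 1 = k + 2 by ring]
  simp only [Nat.factorial_succ]
  push_cast
  have : (k.factorial : ℂ) ≠ 0 := by exact_mod_cast Nat.factorial_ne_zero _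
  have : ((k : ℂ) + 1) ≠ 0 := by exact_mod_cast Nat.succ_ne_zero k
  have : ((k : ℂ) + 1 + 1) ≠ 0 := by exact_mod_cast Nat.succ_ne_zero (k + 1)
  field_simp
  ring

theorem besselSeries_ofReal (m : ℕ) (u : ℝ) : ((besselSeries m u).re : ℂ) = besselSeries m u := by
  rw [← Complex.conj_eq_iff_re]
  simp [besselSeries, Complex.conj_tsum]

theorem abs_besselSeries_zero_le_one {u : ℝ} (hu : 0 ≤ u) : |(besselSeries 0 u).re| ≤ 1 := by
  have hd : ∀ m (x : ℝ), HasDerivAt (fun x : ℝ => (besselSeries m x).re)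
      (-(besselSeries (m + 1) x).re) x := fun m x => by
    simpa using (hasDerivAt_besselSeries m x).real_of_complex
  have hE : ∀ x : ℝ, HasDerivAt
      (fun x : ℝ => (besselSeries 0 x).re ^ 2 + x * (besselSeries 1 x).re ^ 2)
      (-(besselSeries 1 x).re ^ 2) x := fun x => by
    refine (((hd 0 x).pow 2).add ((hasDerivAt_id x).mul ((hd 1 x).pow 2))).congr_deriv ?_
    have := congrArg Complex.re (besselSeries_recurrence x)
    simp at this
    simp
    linear_combination (-2 * (besselSeries 1 x).re) * this
  have hanti : Antitone (fun x : ℝ => (besselSeries 0 x).re ^ 2 + x * (besselSeries 1 x).re ^ 2) :=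
    antitone_of_deriv_nonpos (fun x => (hE x).differentiableAt) fun x => by
      rw [(hE x).deriv]; nlinarith [sq_nonneg (besselSeries 1 x).re]
  have := hanti hu
  simp [besselSeries_zero_right] at this
  rw [← sq_le_one_iff_abs_le_one]
  nlinarith [mul_nonneg hu (sq_nonneg (besselSeries 1 u).re)]

/-- Leibniz' rule for an integral whose upper limit is the parameter. -/
theorem hasDerivAt_integral_variable_limit {K K' : ℝ → ℝ → ℂ}
    (hK : Continuous (Function.uncurry K)) (hK' : Continuous (Function.uncurry K'))
    (hd : ∀ s x, HasDerivAt (fun s => K s x) (K' s x) s) (a b : ℝ) :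
    HasDerivAt (fun s => ∫ x in a..s, K s x) (K b b + ∫ x in a..b, K' b x) b := by
  have hKs : ∀ s, Continuous (K s) := fun s => hK.comp (by fun_prop : Continuous fun x => (s, x))
  have hKs' : ∀ s, Continuous (K' s) := fun s => hK'.comp (by fun_prop : Continuous fun x => (s, x))
  have hKi : ∀ s c d, IntervalIntegrable (K s) volume c d := fun s c d =>
    (hKs s).intervalIntegrable c d
  have hfix : HasDerivAt (fun s => ∫ x in a..b, K s x) (∫ x in a..b, K' b x) b := by
    have hcomp : IsCompact (Metric.closedBall b 1 ×ˢ Set.uIcc a b) :=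
      (isCompact_closedBall b 1).prod isCompact_uIcc
    obtain ⟨C, hC⟩ := hcomp.exists_bound_of_continuousOn hK'.continuousOn
    refine (intervalIntegral.hasDerivAt_integral_of_dominated_loc_of_deriv_le
      (F := K) (F' := K') (bound := fun _ => C) (Metric.ball_mem_nhds b one_pos)
      (Filter.Eventually.of_forall fun s => (hKs s).aestronglyMeasurable) (hKi b a b)
      (hKs' b).aestronglyMeasurable (Filter.Eventually.of_forall fun x hx s hs => ?_)
      intervalIntegrable_const
      (Filter.Eventually.of_forall fun x _ s _ => hd s x)).2
    exact hC (s, x) ⟨Metric.ball_subset_closedBall hs, Set.uIoc_subset_uIcc hx⟩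
  have hftc : HasDerivAt (fun s => ∫ x in b..s, K b x) (K b b) b :=
    intervalIntegral.integral_hasDerivAt_right (hKi b b b)
      ((hKs b).stronglyMeasurableAtFilter _ _) (hKs b).continuousAt
  have hrest : HasDerivAt (fun s => ∫ x in b..s, (K s x - K b x)) 0 b := by
    rw [hasDerivAt_iff_isLittleO]
    simp only [intervalIntegral.integral_same, sub_zero, smul_zero]
    rw [Asymptotics.isLittleO_iff]
    intro ε hε
    have hcont : Continuous fun p : ℝ × ℝ => K p.1 p.2 - K b p.2 :=
      hK.sub ((hKs b).comp continuous_snd)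
    have hc := Metric.continuousAt_iff.1 (hcont.continuousAt (x := (b, b))) ε hε
    obtain ⟨δ, hδ, hc⟩ := hc
    filter_upwards [Metric.ball_mem_nhds b hδ] with s hs
    rw [Real.norm_eq_abs]
    refine intervalIntegral.norm_integral_le_of_norm_le_const fun x hx => ?_
    have hx' : dist x b < δ := by
      refine lt_of_le_of_lt ?_ (Metric.mem_ball.1 hs)
      rw [Real.dist_eq, Real.dist_eq]
      exact Set.abs_sub_left_of_mem_uIcc (Set.uIoc_subset_uIcc hx)
    have := hc (show dist (s, x) (b, b) < δ from max_lt (Metric.mem_ball.1 hs) hx')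
    simpa using this.le
  refine ((hftc.add hfix).add hrest).congr_of_eventuallyEq (Filter.Eventually.of_forall fun s => ?_)
    |>.congr_deriv (by ring)
  simp only [Pi.add_apply]
  rw [intervalIntegral.integral_sub (hKi s b s) (hKi b b s),
    ← intervalIntegral.integral_add_adjacent_intervals (hKi s a b) (hKi s b s)]
  ring

/-- The integral of a Riemann function for the Airy equation along a curve `v` solves the Airy
equation in the end point of the curve. -/
theorem hasDerivAt_riemann_integral {v : ℝ → ℂ} {u u₁ u₁₁ uₓ γ : ℝ → ℝ → ℂ} {a : ℝ}
    (hvc : Continuous v)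
    (huc : Continuous (fun p : ℝ × ℝ => u p.1 p.2))
    (hu₁c : Continuous (fun p : ℝ × ℝ => u₁ p.1 p.2))
    (hu₁₁c : Continuous (fun p : ℝ × ℝ => u₁₁ p.1 p.2))
    (huₓc : ∀ s, Continuous (uₓ s)) (hγc : ∀ s, Continuous (γ s))
    (hus : ∀ s x, HasDerivAt (fun s => u s x) (u₁ s x * (I * v s)) s)
    (hu₁s : ∀ s x, HasDerivAt (fun s => u₁ s x) (u₁₁ s x * (I * v s)) s)
    (hux : ∀ s x, HasDerivAt (u s) (uₓ s x) x)
    (hγ : ∀ s x, HasDerivAt (γ s) ((u₁₁ s x + v s) * (I * v x)) x)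
    (hrel : ∀ s x, uₓ s x * γ s x = (u₁ s x ^ 2 + v s * u s x) * (I * v x))
    (hdiag : ∀ s, u s s = 0) (hbase : ∀ s, u s a = 0)
    (hγdiag : ∀ s, γ s s = -u₁ s s) (hγbase : ∀ s, γ s a = 0) (s : ℝ) :
    HasDerivAt (fun s => ∫ x in a..s, besselSeries 0 (u s x) * (I * v x))
      (I * v s * (1 - ∫ x in a..s, besselSeries 1 (u s x) * u₁ s x * (I * v x))) s ∧
    HasDerivAt (fun s => 1 - ∫ x in a..s, besselSeries 1 (u s x) * u₁ s x * (I * v x))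
      (I * v s * (v s * ∫ x in a..s, besselSeries 0 (u s x) * (I * v x))) s := by
  have hJc := continuous_besselSeries
  have hJ : ∀ m s x, HasDerivAt (fun s => besselSeries m (u s x))
      (-besselSeries (m + 1) (u s x) * (u₁ s x * (I * v s))) s := fun m s x =>
    HasDerivAt.comp (h₂ := besselSeries m) (h := fun s => u s x) s
      (hasDerivAt_besselSeries m (u s x)) (hus s x)
  constructor
  · have := hasDerivAt_integral_variable_limit
      (K := fun s x => besselSeries 0 (u s x) * (I * v x))
      (K' := fun s x => -besselSeries 1 (u s x) * (u₁ s x * (I * v s)) * (I * v x))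
      (by simp only [Function.uncurry_def]; fun_prop)
      (by simp only [Function.uncurry_def]; fun_prop)
      (fun s x => (hJ 0 s x).mul_const (I * v x)) a s
    refine this.congr_deriv ?_
    rw [hdiag, besselSeries_zero_right]
    simp only [mul_sub, ← intervalIntegral.integral_const_mul]
    rw [sub_eq_add_neg, ← intervalIntegral.integral_neg]
    simp only [Nat.factorial_zero, Nat.cast_one, div_one, one_mul, mul_one]
    congr 1
    refine intervalIntegral.integral_congr fun x _ => ?_
    ring
  · have := (hasDerivAt_integral_variable_limit
      (K := fun s x => besselSeries 1 (u s x) * u₁ s x * (I * v x))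
      (K' := fun s x => (-besselSeries 2 (u s x) * (u₁ s x * (I * v s)) * u₁ s x +
        besselSeries 1 (u s x) * (u₁₁ s x * (I * v s))) * (I * v x))
      (by simp only [Function.uncurry_def]; fun_prop)
      (by simp only [Function.uncurry_def]; fun_prop)
      (fun s x => ((hJ 1 s x).mul (hu₁s s x)).mul_const (I * v x)) a s).const_sub 1
    refine this.congr_deriv ?_
    have huc' : Continuous (u s) := huc.comp (by fun_prop : Continuous fun x => (s, x))
    have hu₁c' : Continuous (u₁ s) := hu₁c.comp (by fun_prop : Continuous fun x => (s, x))
    have hu₁₁c' : Continuous (u₁₁ s) := hu₁₁c.comp (by fun_prop : Continuous fun x => (s, x))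
    have hγc' := hγc s
    have huₓc' := huₓc s
    have hexact := intervalIntegral.integral_eq_sub_of_hasDerivAt (a := a) (b := s)
      (f := fun x => -besselSeries 1 (u s x) * γ s x)
      (f' := fun x => -(-besselSeries 2 (u s x) * uₓ s x) * γ s x +
        -besselSeries 1 (u s x) * ((u₁₁ s x + v s) * (I * v x)))
      (fun x _ => ((HasDerivAt.comp (h₂ := besselSeries 1) (h := u s) x
        (hasDerivAt_besselSeries 1 (u s x)) (hux s x)).neg.mul (hγ s x)))
      (Continuous.intervalIntegrable (by fun_prop) _ _)
    have hsplit : (∫ x in a..s, ((-besselSeries 2 (u s x) * (u₁ s x * (I * v s)) * u₁ s x +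
        besselSeries 1 (u s x) * (u₁₁ s x * (I * v s))) * (I * v x))) +
        (∫ x in a..s, I * v s * (v s * (besselSeries 0 (u s x) * (I * v x)))) =
        - (I * v s) * ∫ x in a..s, (-(-besselSeries 2 (u s x) * uₓ s x) * γ s x +
        -besselSeries 1 (u s x) * ((u₁₁ s x + v s) * (I * v x))) := by
      rw [← intervalIntegral.integral_add, ← intervalIntegral.integral_const_mul]
      · refine intervalIntegral.integral_congr fun x _ => ?_
        linear_combination (I * v s * v s * (I * v x)) * besselSeries_recurrence (u s x) +
          I * v s * besselSeries 2 (u s x) * hrel s x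
      · exact Continuous.intervalIntegrable (by fun_prop) _ _
      · exact Continuous.intervalIntegrable (by fun_prop) _ _
    rw [hexact] at hsplit
    simp only [hdiag, hbase, hγdiag, hγbase, besselSeries_zero_right,
      intervalIntegral.integral_const_mul] at hsplit ⊢
    simp only [Nat.factorial_one, Nat.cast_one, div_one, one_mul] at hsplit ⊢
    linear_combination (-1) * hsplit

namespace AiryPair

variable {f f' g g' : ℂ → ℂ}

/-- Riemann's integral formula for the Airy determinant along an arc: `v` parametrises the arc and
`q` is its inverse cube. -/
theorem determinant_eq_integral (h : AiryPair f f' g g') {v q : ℝ → ℂ} {a : ℝ}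
    (hv : ∀ x, HasDerivAt v (I * v x) x) (hq : ∀ x, HasDerivAt q (-(3 * I * q x)) x)
    (hc : v a ^ 3 * q a = 1) (b : ℝ) :
    f (v b) * g (v a) - f (v a) * g (v b) =
      ∫ x in a..b, besselSeries 0 ((v x ^ 3 - v b ^ 3) * (1 - v a ^ 3 * q x) / 9) * (I * v x) := by
  have hvc : Continuous v := continuous_iff_continuousAt.2 fun x => (hv x).continuousAt
  have hqc : Continuous q := continuous_iff_continuousAt.2 fun x => (hq x).continuousAt
  have hdiag : ∀ s, (v s ^ 3 - v s ^ 3) * (1 - v a ^ 3 * q s) / 9 = 0 := by simp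
  have hbase : ∀ s, (v a ^ 3 - v s ^ 3) * (1 - v a ^ 3 * q a) / 9 = 0 := by simp [hc]
  generalize hcdef : v a = c at *
  have hd := fun s => hasDerivAt_riemann_integral (v := v) (a := a)
    (u := fun s x => (v x ^ 3 - v s ^ 3) * (1 - c ^ 3 * q x) / 9)
    (u₁ := fun s x => -(v s ^ 2 / 3) * (1 - c ^ 3 * q x))
    (u₁₁ := fun s x => -(2 * v s / 3) * (1 - c ^ 3 * q x))
    (uₓ := fun s x => (I / 3) * (v x ^ 3 - v s ^ 3 * c ^ 3 * q x))
    (γ := fun s x => v s * v x / 3 * (1 - c ^ 3 * q x)) hvc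
    (by fun_prop) (by fun_prop) (by fun_prop) (by fun_prop) (by fun_prop)
    (fun s x => by
      refine ((((hv s).pow 3).const_sub (v x ^ 3)).mul_const (1 - c ^ 3 * q x)).div_const 9
        |>.congr_deriv ?_
      push_cast; ring)
    (fun s x => by
      refine ((((hv s).pow 2).div_const 3).neg.mul_const (1 - c ^ 3 * q x))
        |>.congr_deriv ?_
      push_cast; ring)
    (fun s x => by
      refine ((((hv x).pow 3).sub_const (v s ^ 3)).mul
        (((hq x).const_mul (c ^ 3)).const_sub 1)).div_const 9 |>.congr_deriv ?_
      simp only [Pi.pow_apply]; push_cast; ring)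
    (fun s x => by
      refine ((((hv x).const_mul (v s)).div_const 3).mul
        (((hq x).const_mul (c ^ 3)).const_sub 1)) |>.congr_deriv ?_
      ring)
    (fun s x => by ring) hdiag (by rw [hcdef]; exact hbase) (fun s => by ring) (fun s => by simp [hc]) s
  have hconst : ∀ w w' : ℂ → ℂ, AirySol w w' → ∀ s,
      (∫ x in a..s, besselSeries 0 ((v x ^ 3 - v s ^ 3) * (1 - c ^ 3 * q x) / 9) * (I * v x)) *
        w' (v s) - (1 - ∫ x in a..s, besselSeries 1
          ((v x ^ 3 - v s ^ 3) * (1 - c ^ 3 * q x) / 9) * (-(v s ^ 2 / 3) * (1 - c ^ 3 * q x)) *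
            (I * v x)) * w (v s) = -w c := fun w w' hw s => by
    have hder := fun s => (((hd s).1.mul ((hw.hasDerivAt' (v s)).comp s (hv s))).sub
        ((hd s).2.mul ((hw.hasDerivAt (v s)).comp s (hv s)))).congr_deriv (g' := 0)
        (by simp only [Function.comp_apply]; ring)
    have := is_const_of_deriv_eq_zero (fun s => (hder s).differentiableAt)
      (fun s => (hder s).deriv) s a
    simpa [hcdef] using this
  have e1 := hconst f f' h.left b
  have e2 := hconst g g' h.right b
  have e3 := h.wronskian (v b)
  generalize (∫ x in a..b, besselSeries 0 ((v x ^ 3 - v b ^ 3) * (1 - c ^ 3 * q x) / 9) *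
    (I * v x)) = H at *
  linear_combination H * e3 - g (v b) * e1 + f (v b) * e2

end AiryPair

namespace AiryPair

variable {f f' g g' : ℂ → ℂ}

/-- The determinant at a pair of conjugate points in the sector `|arg z| < π/3` is bounded by
its linearisation. -/
theorem abs_im_determinant_le (h : AiryPair f f' g g') {r φ : ℝ} (hr : 0 < r) (hφ : 0 ≤ φ)
    (hφ' : φ ≤ π / 3) :
    |(f (r * exp (φ * I)) * g (r * exp (-φ * I)) -
      f (r * exp (-φ * I)) * g (r * exp (φ * I))).im| ≤ 2 * r * Real.sin φ := by
  have hπ := Real.pi_pos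
  have hr0 : (r : ℂ) ≠ 0 := by exact_mod_cast hr.ne'
  have hexp : ∀ (k : ℂ) (x : ℝ), HasDerivAt (fun x : ℝ => exp (x * (k * I)))
      (k * I * exp (x * (k * I))) x := fun k x => by
    refine ((hasDerivAt_id (x : ℂ)).mul_const (k * I)).cexp.comp_ofReal.congr_deriv ?_
    simp; ring
  have key := h.determinant_eq_integral (v := fun x : ℝ => (r : ℂ) * exp (x * (1 * I)))
    (q := fun x : ℝ => ((r : ℂ) ^ 3)⁻¹ * exp (x * (-3 * I))) (a := -φ)
    (fun x => ((hexp 1 x).const_mul (r : ℂ)).congr_deriv (by ring))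
    (fun x => ((hexp (-3) x).const_mul ((r : ℂ) ^ 3)⁻¹).congr_deriv (by ring))
    (by
      rw [mul_pow, ← Complex.exp_nat_mul, mul_mul_mul_comm, mul_inv_cancel₀ (pow_ne_zero 3 hr0),
        ← Complex.exp_add, one_mul, Complex.exp_eq_one_iff]
      exact ⟨0, by push_cast; ring⟩) φ
  simp only [one_mul, Complex.ofReal_neg] at key
  rw [key]
  set U : ℝ → ℝ := fun x => 2 / 9 * r ^ 3 * (Real.cos (3 * x) - Real.cos (3 * φ)) with hU
  have hu : ∀ x : ℝ, (((r : ℂ) * exp (x * I)) ^ 3 - ((r : ℂ) * exp (φ * I)) ^ 3) *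
      (1 - ((r : ℂ) * exp (-φ * I)) ^ 3 * (((r : ℂ) ^ 3)⁻¹ * exp (x * (-3 * I)))) / 9 = (U x : ℂ) := by
    intro x
    simp only [hU]
    push_cast
    have e1 : ((r : ℂ) * exp (-φ * I)) ^ 3 * (((r : ℂ) ^ 3)⁻¹ * exp (x * (-3 * I))) =
        exp (-(3 * φ) * I) * exp (-(3 * x) * I) := by
      rw [mul_pow, ← Complex.exp_nat_mul, mul_mul_mul_comm, mul_inv_cancel₀ (pow_ne_zero 3 hr0),
        one_mul]
      congr 2 <;> · push_cast; ring
    rw [e1, mul_pow, mul_pow, ← Complex.exp_nat_mul, ← Complex.exp_nat_mul,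
      Complex.cos, Complex.cos]
    have h1 : exp (3 * x * I) * exp (-(3 * x) * I) = 1 := by
      rw [← Complex.exp_add, ← Complex.exp_zero]; congr 1; ring
    have h2 : exp (3 * φ * I) * exp (-(3 * φ) * I) = 1 := by
      rw [← Complex.exp_add, ← Complex.exp_zero]; congr 1; ring
    have h3 : ((3 : ℕ) : ℂ) * (x * I) = 3 * x * I := by push_cast; ring
    have h4 : ((3 : ℕ) : ℂ) * (φ * I) = 3 * φ * I := by push_cast; ring
    rw [h3, h4]
    linear_combination (-(r : ℂ) ^ 3 / 9 * exp (-(3 * φ) * I)) * h1 +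
      ((r : ℂ) ^ 3 / 9 * exp (-(3 * x) * I)) * h2
  simp only [hu]
  have hUc : Continuous U := by simp only [hU]; fun_prop
  have hJc := continuous_besselSeries 0
  have him := Complex.imCLM.intervalIntegral_comp_comm (μ := volume) (a := -φ) (b := φ)
    (f := fun x : ℝ => besselSeries 0 (U x : ℂ) * (I * (r * exp (x * I))))
    (Continuous.intervalIntegrable (by fun_prop) _ _)
  simp only [Complex.imCLM_apply] at him
  rw [← him]
  have hval : ∀ x : ℝ, (besselSeries 0 (U x : ℂ) * (I * (r * exp (x * I)))).im =
      (besselSeries 0 (U x : ℂ)).re * (r * Real.cos x) := fun x => by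
    rw [← besselSeries_ofReal, Complex.exp_mul_I]
    simp [← Complex.ofReal_cos, ← Complex.ofReal_sin]
  simp only [hval]
  have hle : (-φ) ≤ φ := by linarith
  rw [← Real.norm_eq_abs]
  refine (intervalIntegral.norm_integral_le_of_norm_le (g := fun x => r * Real.cos x) hle
    (Filter.Eventually.of_forall fun x hx => ?_)
    (Continuous.intervalIntegrable (by fun_prop) _ _)).trans ?_
  · have hxl : |x| ≤ φ := abs_le.2 ⟨hx.1.le, hx.2⟩
    have hcos : 0 ≤ Real.cos x := Real.cos_nonneg_of_neg_pi_div_two_le_of_le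
      (by linarith [hx.1]) (by linarith [hx.2])
    have hU0 : 0 ≤ U x := by
      have : Real.cos (3 * φ) ≤ Real.cos (3 * x) := by
        rw [← Real.cos_abs (3 * x)]
        refine Real.cos_le_cos_of_nonneg_of_le_pi (abs_nonneg _) (by linarith) ?_
        rw [abs_mul, abs_of_pos (by norm_num : (0 : ℝ) < 3)]; linarith
      simp only [hU]
      have := sub_nonneg.2 this
      positivity
    rw [norm_mul, Real.norm_eq_abs, Real.norm_eq_abs, abs_of_nonneg (mul_nonneg hr.le hcos)]
    exact mul_le_of_le_one_left (mul_nonneg hr.le hcos) (abs_besselSeries_zero_le_one hU0)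
  · rw [intervalIntegral.integral_const_mul, integral_cos, Real.sin_neg]
    linarith

end AiryPair

theorem le_of_hasDerivAt_nonneg {T T' : ℝ → ℝ} {a b : ℝ} (hab : a ≤ b)
    (hd : ∀ x ∈ Set.Icc a b, HasDerivAt T (T' x) x) (hT : ∀ x ∈ Set.Ioo a b, 0 ≤ T' x) :
    T a ≤ T b := by
  refine monotoneOn_of_deriv_nonneg (convex_Icc a b)
    (fun x hx => (hd x hx).continuousAt.continuousWithinAt)
    (fun x hx => (hd x (interior_subset hx)).differentiableAt.differentiableWithinAt)
    (fun x hx => ?_) (Set.left_mem_Icc.2 hab) (Set.right_mem_Icc.2 hab) hab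
  rw [(hd x (interior_subset hx)).deriv]
  exact hT x (by simpa using hx)

namespace AiryPair

variable {f f' g g' : ℂ → ℂ}

theorem determinant_partials (h : AiryPair f f' g g') (z y : ℂ) :
    (f' z * g y - f y * g' z) * (f z * g' y - f' y * g z) -
      (f z * g y - f y * g z) * (f' z * g' y - f' y * g' z) = -1 := by
  linear_combination (-1) * (f' y * g y - f y * g' y) * h.wronskian z - h.wronskian y

/-- Inside the sector `|arg z| < π/3` the determinant has no double zero at a pair of conjugate
points. -/
theorem not_double_zero_of_sector (h : AiryPair f f' g g') {R₀ σ₀ : ℝ} (hR₀ : 0 < R₀)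
    (hσ₀ : 0 < σ₀) (hσ₀' : σ₀ < π / 6) {z y : ℂ} (hz : z = R₀ * exp (2 * σ₀ * I))
    (hy : y = R₀ * exp (-(2 * σ₀) * I))
    (h0 : f z * g y - f y * g z = 0)
    (h1 : (f' z * g y - f y * g' z) + (f z * g' y - f' y * g z) = 0) : False := by
  have hπ := Real.pi_pos
  have hcos : ∀ x ∈ Set.Icc 0 σ₀, 0 < Real.cos (3 * x) := fun x hx =>
    Real.cos_pos_of_mem_Ioo ⟨by linarith [hx.1], by linarith [hx.2]⟩
  have hσmem : σ₀ ∈ Set.Icc 0 σ₀ := ⟨hσ₀.le, le_rfl⟩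
  obtain ⟨R, hRpos, hRd, hRσ⟩ : ∃ R : ℝ → ℝ, (∀ x ∈ Set.Icc 0 σ₀, 0 < R x) ∧
      (∀ x ∈ Set.Icc 0 σ₀, HasDerivAt R
        (2 * R x * (Real.sin (3 * x) / Real.cos (3 * x))) x) ∧ R σ₀ = R₀ := by
    refine ⟨fun x => R₀ * Real.cos (3 * σ₀) ^ (2 / 3 : ℝ) * Real.cos (3 * x) ^ (-2 / 3 : ℝ),
      fun x hx => ?_, fun x hx => ?_, ?_⟩
    · have := hcos x hx
      have := hcos σ₀ hσmem
      positivity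
    · have hc := hcos x hx
      have hl : HasDerivAt (fun x : ℝ => Real.cos (3 * x)) (-Real.sin (3 * x) * 3) x := by
        simpa using ((hasDerivAt_id x).const_mul 3).cos
      refine ((hl.rpow_const (p := (-2 / 3 : ℝ)) (Or.inl hc.ne')).const_mul
        (R₀ * Real.cos (3 * σ₀) ^ (2 / 3 : ℝ))).congr_deriv ?_
      rw [Real.rpow_sub_one hc.ne']
      ring
    · dsimp only
      rw [mul_assoc, ← Real.rpow_add (hcos σ₀ hσmem)]
      norm_num
  have hE : ∀ x : ℝ, HasDerivAt (fun x : ℝ => exp (x * I)) (I * exp (x * I)) x := fun x => by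
    refine ((hasDerivAt_id (x : ℂ)).mul_const I).cexp.comp_ofReal.congr_deriv ?_
    simp; ring
  have hEb : ∀ x : ℝ, HasDerivAt (fun x : ℝ => exp (-x * I)) (-I * exp (-x * I)) x := fun x => by
    refine ((hasDerivAt_id (x : ℂ)).neg.mul_const I).cexp.comp_ofReal.congr_deriv ?_
    simp; ring
  have hEE : ∀ x : ℝ, exp (x * I) * exp (-x * I) = 1 := fun x => by
    rw [← Complex.exp_add, Complex.exp_eq_one_iff]; exact ⟨0, by push_cast; ring⟩
  have hE3 : ∀ x : ℝ, (Real.cos (3 * x) : ℂ) + I * Real.sin (3 * x) = exp (x * I) ^ 3 := fun x => by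
    rw [← Complex.exp_nat_mul, show ((3 : ℕ) : ℂ) * (x * I) = (3 * x : ℝ) * I by push_cast; ring,
      Complex.exp_mul_I]
    push_cast; ring
  have hEb3 : ∀ x : ℝ, (Real.cos (3 * x) : ℂ) - I * Real.sin (3 * x) = exp (-x * I) ^ 3 :=
    fun x => by
    rw [← Complex.exp_nat_mul, show ((3 : ℕ) : ℂ) * (-x * I) = (-(3 * x) : ℝ) * I by
      push_cast; ring, Complex.exp_mul_I, ← Complex.ofReal_cos, ← Complex.ofReal_sin,
      Real.cos_neg, Real.sin_neg]
    push_cast; ring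
  set Z : ℝ → ℂ := fun x => R x * exp (x * I) ^ 2 with hZdef
  set Y : ℝ → ℂ := fun x => R x * exp (-x * I) ^ 2 with hYdef
  have hZY : ∀ x, Z x = R x * exp ((2 * x : ℝ) * I) ∧ Y x = R x * exp (-(2 * x : ℝ) * I) :=
    fun x => by
    simp only [hZdef, hYdef, ← Complex.exp_nat_mul]
    constructor <;> · congr 2; push_cast; ring
  have hZ : ∀ x ∈ Set.Icc 0 σ₀, HasDerivAt Z
      (2 * I * R x * exp (-x * I) / Real.cos (3 * x)) x := fun x hx => by
    refine ((hRd x hx).ofReal_comp.mul ((hE x).pow 2)).congr_deriv ?_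
    have hc : (Real.cos (3 * x) : ℂ) ≠ 0 := by exact_mod_cast (hcos x hx).ne'
    simp only [Complex.ofReal_mul, Complex.ofReal_div, Complex.ofReal_ofNat, Pi.pow_apply,
      Nat.cast_ofNat, Nat.add_one_sub_one, pow_one]
    have e1 := hEE x
    have e2 := hEb3 x
    generalize exp (x * I) = E at *
    generalize exp (-x * I) = Eb at *
    field_simp
    linear_combination R x * ((I * E ^ 2) * e2 + (E ^ 2 * Real.sin (3 * x)) * Complex.I_sq +
      I * (Eb * (E * Eb + 1)) * e1)
  have hY : ∀ x ∈ Set.Icc 0 σ₀, HasDerivAt Y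
      (-(2 * I * R x * exp (x * I) / Real.cos (3 * x))) x := fun x hx => by
    refine ((hRd x hx).ofReal_comp.mul ((hEb x).pow 2)).congr_deriv ?_
    have hc : (Real.cos (3 * x) : ℂ) ≠ 0 := by exact_mod_cast (hcos x hx).ne'
    simp only [Complex.ofReal_mul, Complex.ofReal_div, Complex.ofReal_ofNat, Pi.pow_apply,
      Nat.cast_ofNat, Nat.add_one_sub_one, pow_one]
    have e1 := hEE x
    have e2 := hE3 x
    generalize exp (x * I) = E at *
    generalize exp (-x * I) = Eb at *
    field_simp
    linear_combination R x * ((-I * Eb ^ 2) * e2 + (Eb ^ 2 * Real.sin (3 * x)) * Complex.I_sq -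
      I * (E * (E * Eb + 1)) * e1)
  set F : ℝ → ℂ := fun x => f (Z x) * g (Y x) - f (Y x) * g (Z x) with hF
  set G : ℝ → ℂ := fun x => exp (-x * I) * (f' (Z x) * g (Y x) - f (Y x) * g' (Z x)) +
    exp (x * I) * (f (Z x) * g' (Y x) - f' (Y x) * g (Z x)) +
    ((Real.cos (3 * x) / (2 * R x) : ℝ) : ℂ) * F x with hG
  have hGd : ∀ x ∈ Set.Icc 0 σ₀, HasDerivAt G
      (((-(5 / 2 * Real.sin (3 * x) / R x) : ℝ) : ℂ) * F x) x := fun x hx => by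
    have hc := (hcos x hx).ne'
    have hr := (hRpos x hx).ne'
    have hc' : (Real.cos (3 * x) : ℂ) ≠ 0 := by exact_mod_cast hc
    have hr' : (R x : ℂ) ≠ 0 := by exact_mod_cast hr
    have hκ : HasDerivAt (fun x => Real.cos (3 * x) / (2 * R x))
        (-(5 / 2 * Real.sin (3 * x) / R x)) x := by
      have hl : HasDerivAt (fun x : ℝ => Real.cos (3 * x)) (-Real.sin (3 * x) * 3) x := by
        simpa using ((hasDerivAt_id x).const_mul 3).cos
      refine (hl.div ((hRd x hx).const_mul 2) (by positivity)).congr_deriv ?_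
      field_simp
      ring
    have a1 := (h.left.hasDerivAt (Z x)).comp x (hZ x hx)
    have a2 := (h.left.hasDerivAt' (Z x)).comp x (hZ x hx)
    have a3 := (h.right.hasDerivAt (Z x)).comp x (hZ x hx)
    have a4 := (h.right.hasDerivAt' (Z x)).comp x (hZ x hx)
    have b1 := (h.left.hasDerivAt (Y x)).comp x (hY x hx)
    have b2 := (h.left.hasDerivAt' (Y x)).comp x (hY x hx)
    have b3 := (h.right.hasDerivAt (Y x)).comp x (hY x hx)
    have b4 := (h.right.hasDerivAt' (Y x)).comp x (hY x hx)
    refine ((((hEb x).mul ((a2.mul b3).sub (b1.mul a4))).add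
      ((hE x).mul ((a1.mul b4).sub (b2.mul a3)))).add
      (hκ.ofReal_comp.mul ((a1.mul b3).sub (b1.mul a3)))).congr_deriv ?_
    simp only [Pi.mul_apply, Pi.sub_apply, Function.comp_apply, hF]
    have c1 : -I * exp (-x * I) + ((Real.cos (3 * x) / (2 * R x) : ℝ) : ℂ) *
        (2 * I * R x * exp (-x * I) / Real.cos (3 * x)) = 0 := by
      rw [Complex.ofReal_div, Complex.ofReal_mul, Complex.ofReal_ofNat]
      field_simp
      ring
    have c2 : I * exp (x * I) + ((Real.cos (3 * x) / (2 * R x) : ℝ) : ℂ) *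
        -(2 * I * R x * exp (x * I) / Real.cos (3 * x)) = 0 := by
      rw [Complex.ofReal_div, Complex.ofReal_mul, Complex.ofReal_ofNat]
      field_simp
      ring
    have c3 : exp (-x * I) * Z x * (2 * I * R x * exp (-x * I) / Real.cos (3 * x)) +
        exp (x * I) * Y x * -(2 * I * R x * exp (x * I) / Real.cos (3 * x)) = 0 := by
      simp only [hZdef, hYdef]; ring
    have c4 : exp (-x * I) * -(2 * I * R x * exp (x * I) / Real.cos (3 * x)) +
        exp (x * I) * (2 * I * R x * exp (-x * I) / Real.cos (3 * x)) = 0 := by ring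
    linear_combination (f' (Z x) * g (Y x) - f (Y x) * g' (Z x)) * c1 +
      (f (Z x) * g' (Y x) - f' (Y x) * g (Z x)) * c2 +
      (f (Z x) * g (Y x) - f (Y x) * g (Z x)) * c3 +
      (f' (Z x) * g' (Y x) - f' (Y x) * g' (Z x)) * c4
  have hGim : ∀ x ∈ Set.Icc 0 σ₀, HasDerivAt (fun x => (G x).im)
      (-(5 / 2 * Real.sin (3 * x) / R x) * (F x).im) x := fun x hx => by
    have := Complex.imCLM.hasFDerivAt.comp_hasDerivAt x (hGd x hx)
    rw [Complex.imCLM_apply, Complex.im_ofReal_mul] at this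
    exact this
  have hS : ∀ x : ℝ, HasDerivAt (fun x => 5 / 2 * Real.sin x - 1 / 2 * Real.sin (5 * x))
      (5 * Real.sin (3 * x) * Real.sin (2 * x)) x := fun x => by
    refine (((Real.hasDerivAt_sin x).const_mul (5 / 2)).sub
      ((((hasDerivAt_id x).const_mul 5).sin).const_mul (1 / 2))).congr_deriv ?_
    have e1 : Real.cos x = Real.cos (3 * x - 2 * x) := by ring_nf
    have e2 : Real.cos (5 * x) = Real.cos (3 * x + 2 * x) := by ring_nf
    simp only [id]
    rw [e1, e2, Real.cos_sub, Real.cos_add]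
    ring
  have hbound : ∀ x ∈ Set.Icc 0 σ₀, |-(5 / 2 * Real.sin (3 * x) / R x) * (F x).im| ≤
      5 * Real.sin (3 * x) * Real.sin (2 * x) := fun x hx => by
    have hr := hRpos x hx
    have hb := h.abs_im_determinant_le hr (φ := 2 * x) (by linarith [hx.1]) (by linarith [hx.2])
    have hs : 0 ≤ Real.sin (3 * x) :=
      Real.sin_nonneg_of_nonneg_of_le_pi (by linarith [hx.1]) (by linarith [hx.2])
    rw [← (hZY x).1, ← (hZY x).2] at hb
    have hk : 0 ≤ 5 / 2 * Real.sin (3 * x) / R x := by positivity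
    rw [abs_mul, abs_neg, abs_of_nonneg hk]
    refine (mul_le_mul_of_nonneg_left hb hk).trans (le_of_eq ?_)
    field_simp
  have hG0 : G 0 = 0 := by
    simp only [hG, hF, hZdef, hYdef]
    simp
  have hup := le_of_hasDerivAt_nonneg hσ₀.le (fun x hx => (hS x).sub (hGim x hx))
    (fun x hx => by
      have := abs_le.1 (hbound x (Set.Ioo_subset_Icc_self hx)); linarith [this.2])
  have hlow := le_of_hasDerivAt_nonneg hσ₀.le (fun x hx => (hS x).add (hGim x hx))
    (fun x hx => by
      have := abs_le.1 (hbound x (Set.Ioo_subset_Icc_self hx)); linarith [this.1])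
  simp only [Pi.sub_apply, Pi.add_apply, hG0] at hup hlow
  simp at hup hlow
  have hZσ : Z σ₀ = z := by rw [(hZY σ₀).1, hz, hRσ]; push_cast; rfl
  have hYσ : Y σ₀ = y := by rw [(hZY σ₀).2, hy, hRσ]; push_cast; rfl
  have hp := h.determinant_partials z y
  have hsin : Real.sin σ₀ < Real.sin (5 * σ₀) := by
    have e1 : Real.sin (5 * σ₀) = Real.sin (3 * σ₀ + 2 * σ₀) := by ring_nf
    have e2 : Real.sin σ₀ = Real.sin (3 * σ₀ - 2 * σ₀) := by ring_nf
    rw [e1, e2, Real.sin_add, Real.sin_sub]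
    have := hcos σ₀ hσmem
    have : 0 < Real.sin (2 * σ₀) := Real.sin_pos_of_pos_of_lt_pi (by linarith) (by linarith)
    have : 0 < Real.cos (3 * σ₀) * Real.sin (2 * σ₀) := by positivity
    linarith
  have hGσ : G σ₀ = (f' z * g y - f y * g' z) * (-(2 * Real.sin σ₀ : ℝ) * I) := by
    simp only [hG, hF, hZσ, hYσ, h0]
    have es : exp (-σ₀ * I) - exp (σ₀ * I) = -(2 * Real.sin σ₀ : ℝ) * I := by
      rw [Complex.exp_mul_I, Complex.exp_mul_I, Complex.cos_neg, Complex.sin_neg]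
      push_cast; ring
    linear_combination exp (σ₀ * I) * h1 + (f' z * g y - f y * g' z) * es
  have hsq : (f' z * g y - f y * g' z) * (f' z * g y - f y * g' z) = 1 := by
    linear_combination (f' z * g y - f y * g' z) * h1 - hp -
      (f' z * g' y - f' y * g' z) * h0
  rcases mul_self_eq_one_iff.1 hsq with hq | hq
  · have := congrArg Complex.im hGσ
    rw [hq, one_mul, ← Complex.ofReal_neg, Complex.im_ofReal_mul, Complex.I_im] at this
    linarith
  · have := congrArg Complex.im hGσ
    rw [hq, neg_one_mul, neg_mul, neg_neg, Complex.im_ofReal_mul, Complex.I_im] at this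
    linarith

end AiryPair

theorem eq_left_of_hasDerivAt_nonneg {T T' : ℝ → ℝ} {a b : ℝ}
    (hc : ContinuousOn T (Set.Icc a b)) (hd : ∀ x ∈ Set.Ioo a b, HasDerivAt T (T' x) x)
    (hT : ∀ x ∈ Set.Ioo a b, 0 ≤ T' x) (hab : T b ≤ T a) {x : ℝ} (hx : x ∈ Set.Icc a b) :
    T x = T a := by
  have hmono : MonotoneOn T (Set.Icc a b) := by
    refine monotoneOn_of_deriv_nonneg (convex_Icc a b) hc
      (fun x hx => (hd x (by simpa using hx)).differentiableAt.differentiableWithinAt)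
      (fun x hx => ?_)
    have hx' : x ∈ Set.Ioo a b := by simpa using hx
    rw [(hd x hx').deriv]
    exact hT x hx'
  have hle : a ≤ b := hx.1.trans hx.2
  exact le_antisymm ((hmono hx (Set.right_mem_Icc.2 hle) hx.2).trans hab)
    (hmono (Set.left_mem_Icc.2 hle) hx hx.1)

/-- A function with nonnegative derivative that does not increase has vanishing derivative. -/
theorem deriv_eq_zero_of_hasDerivAt_nonneg {T T' : ℝ → ℝ} {a b : ℝ}
    (hc : ContinuousOn T (Set.Icc a b)) (hd : ∀ x ∈ Set.Ioo a b, HasDerivAt T (T' x) x)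
    (hT : ∀ x ∈ Set.Ioo a b, 0 ≤ T' x) (hab : T b ≤ T a) {x : ℝ} (hx : x ∈ Set.Ioo a b) :
    T' x = 0 := by
  refine (hd x hx).unique ((hasDerivAt_const x (T a)).congr_of_eventuallyEq ?_)
  filter_upwards [Ioo_mem_nhds hx.1 hx.2] with y hy
  exact eq_left_of_hasDerivAt_nonneg hc hd hT hab (Set.Ioo_subset_Icc_self hy)

theorem continuousOn_of_hasDerivAt {T T' : ℝ → ℝ} (hd : ∀ x, HasDerivAt T (T' x) x) (s : Set ℝ) :
    ContinuousOn T s := fun x _ => (hd x).continuousAt.continuousWithinAt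

/-- Picone-type argument: a solution of the Airy equation which is real on the real axis cannot
vanish with real squared derivative at a point reached from `a ≤ 0` in direction `e = exp(iπ/3)`
before the solution `ρ` of `ρ'' = -tρ` vanishes. -/
theorem AirySol.picone_ray {w w' : ℂ → ℂ} (hw : AirySol w w') {e : ℂ} (he_re : e.re = 1 / 2)
    (he_im : e.im = √3 / 2) {a r : ℝ} (ha : a ≤ 0) (hr : 0 < r) {ρ ρ' : ℝ → ℝ}
    (hρ : ∀ t, HasDerivAt ρ (ρ' t) t) (hρ' : ∀ t, HasDerivAt ρ' (-t * ρ t) t)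
    (hρ0 : ρ 0 = 0) (hρ'0 : ρ' 0 = 1) (hρpos : ∀ t ∈ Set.Ioc 0 r, 0 < ρ t)
    (hwa : (w a).im = 0) (hwa' : (w' a).im = 0) (hwr : w (a + r * e) = 0)
    (hwr' : ((w' (a + r * e)) ^ 2).im = 0) : ∃ z, w z = 0 ∧ w' z = 0 := by
  have h3 : √3 * √3 = 3 := Real.mul_self_sqrt (by norm_num)
  have h3pos : 0 < √3 := by positivity
  have he2 : e ^ 2 = e - 1 := by
    apply Complex.ext
    · simp [pow_two, he_re, he_im]; nlinarith
    · simp [pow_two, he_re, he_im]; ring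
  have hline : ∀ t : ℝ, HasDerivAt (fun t : ℝ => (a : ℂ) + t * e) e t := fun t => by
    simpa using (((hasDerivAt_id (t : ℂ)).mul_const e).const_add (a : ℂ)).comp_ofReal
  set y : ℝ → ℂ := fun t => w (a + t * e) with hy
  set D : ℝ → ℂ := fun t => w' (a + t * e) with hD
  have hyd : ∀ t, HasDerivAt y (e * D t) t := fun t =>
    ((hw.hasDerivAt _).comp t (hline t)).congr_deriv (by simp only [hD]; ring)
  have hDd : ∀ t : ℝ, HasDerivAt D (e * ((a + t * e) * y t)) t := fun t =>
    ((hw.hasDerivAt' _).comp t (hline t)).congr_deriv (by simp only [hy]; ring)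
  have him : ∀ {k : ℝ → ℂ} {k' : ℂ} {t : ℝ}, HasDerivAt k k' t →
      HasDerivAt (fun t => (k t).im) k'.im t := fun hk =>
    Complex.imCLM.hasFDerivAt.comp_hasDerivAt _ hk
  set d : ℝ → ℝ := fun t => (y t).im with hd
  set s : ℝ → ℝ := fun t => (y t).re with hs
  set d₁ : ℝ → ℝ := fun t => (e * D t).im with hd₁
  set κ : ℝ → ℝ := fun t => 1 / 2 * d t - √3 / 2 * s t with hκ
  have hdd : ∀ t, HasDerivAt d (d₁ t) t := fun t => him (hyd t)
  have hd₁d : ∀ t, HasDerivAt d₁ (-t * d t - a * κ t) t := fun t => by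
    refine (him ((hDd t).const_mul e)).congr_deriv ?_
    have e1 : e * (e * ((a + t * e) * y t)) = (a * (e - 1) - t) * y t := by
      linear_combination ((a : ℂ) + t * (e + 1)) * y t * he2
    rw [e1]
    simp [he_re, he_im, hκ, hd, hs]
    ring
  set Ω : ℝ → ℝ := fun t => (-(D t ^ 2 - (a + t * e) * y t ^ 2)).im with hΩ
  have hΩd : ∀ t, HasDerivAt Ω (√3 / 2 * (s t ^ 2 - d t ^ 2) + s t * d t) t := fun t => by
    refine (him (((hDd t).pow 2).sub ((hline t).mul ((hyd t).pow 2))).neg).congr_deriv ?_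
    have e1 : -((2 : ℕ) * D t ^ (2 - 1) * (e * ((a + t * e) * y t)) -
        (e * (y ^ 2) t + (a + t * e) * ((2 : ℕ) * y t ^ (2 - 1) * (e * D t)))) = e * y t ^ 2 := by
      simp only [Pi.pow_apply]; push_cast; ring
    rw [e1]
    simp [he_re, he_im, hd, hs, pow_two]
    ring
  have hd0 : d 0 = 0 := by simp [hd, hy, hwa]
  have hdr : d r = 0 := by simp [hd, hy, hwr]
  have hΩ0 : Ω 0 = 0 := by simp [hΩ, hy, hD, hwa, hwa', pow_two]
  have hΩr : Ω r = 0 := by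
    simp only [hΩ, hy, hD, hwr]
    simpa using hwr'
  have hIoo : ∀ {t}, t ∈ Set.Ioo 0 r → 0 < ρ t := fun ht => hρpos _ ⟨ht.1, ht.2.le⟩
  set M : ℝ → ℝ := fun t => d₁ t * d t - d t * (d t / ρ t) * ρ' t - √3 / 4 * a * Ω t with hM
  have hMd : ∀ t ∈ Set.Ioc 0 r, HasDerivAt M
      ((d₁ t - d t / ρ t * ρ' t) ^ 2 - a / 2 * κ t ^ 2) t := fun t ht => by
    have hne := (hρpos t ht).ne'
    refine ((((hd₁d t).mul (hdd t)).sub (((hdd t).mul ((hdd t).div (hρ t) hne)).mul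
      (hρ' t))).sub ((hΩd t).const_mul (√3 / 4 * a))).congr_deriv ?_
    simp only [hκ, Pi.mul_apply, Pi.div_apply]
    field_simp
    linear_combination (4 * a * d t ^ 2 * ρ t ^ 2) * h3
  have hMc : ContinuousOn M (Set.Icc 0 r) := by
    intro t ht
    rcases ht.1.eq_or_lt with rfl | htpos
    · have hslope : Filter.Tendsto (fun t => d t / ρ t) (nhdsWithin 0 (Set.Ioi 0)) (nhds (d₁ 0)) := by
        have l1 := (hdd 0).tendsto_slope_zero_right
        have l2 := (hρ 0).tendsto_slope_zero_right
        rw [hρ'0] at l2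
        have l3 := l1.div l2 one_ne_zero
        rw [div_one] at l3
        refine l3.congr' ?_
        filter_upwards [self_mem_nhdsWithin] with t ht
        have : t ≠ 0 := (Set.mem_Ioi.1 ht).ne'
        simp only [Pi.div_apply, zero_add, hd0, hρ0, sub_zero, smul_eq_mul]
        exact mul_div_mul_left _ _ (inv_ne_zero this)
      have hlim : ∀ {k k' : ℝ → ℝ}, (∀ t, HasDerivAt k (k' t) t) →
          Filter.Tendsto k (nhdsWithin 0 (Set.Ioi 0)) (nhds (k 0)) := fun hk =>
        (hk 0).continuousAt.tendsto.mono_left nhdsWithin_le_nhds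
      have hcont : ContinuousWithinAt M (Set.Ioi 0) 0 := by
        have := ((((hlim hd₁d).mul (hlim hdd)).sub (((hlim hdd).mul hslope).mul (hlim hρ'))).sub
          ((hlim hΩd).const_mul (√3 / 4 * a)))
        unfold ContinuousWithinAt
        convert this using 2
        simp only [hM, hd0]
        ring
      exact (continuousWithinAt_Ioi_iff_Ici.1 hcont).mono Set.Icc_subset_Ici_self
    · exact (hMd t ⟨htpos, ht.2⟩).continuousAt.continuousWithinAt
  have hMzero : ∀ t ∈ Set.Ioo 0 r, (d₁ t - d t / ρ t * ρ' t) ^ 2 - a / 2 * κ t ^ 2 = 0 :=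
    fun t ht => deriv_eq_zero_of_hasDerivAt_nonneg hMc (fun t ht => hMd t ⟨ht.1, ht.2.le⟩)
      (fun t _ => by nlinarith [sq_nonneg (d₁ t - d t / ρ t * ρ' t), sq_nonneg (κ t)])
      (by simp [hM, hd0, hdr, hΩ0, hΩr]) ht
  have hdzero : ∀ t ∈ Set.Ioo 0 r, d t = 0 := fun t ht => by
    have hq : ∀ x ∈ Set.Icc t r, HasDerivAt (fun x => d x / ρ x)
        ((d₁ x * ρ x - d x * ρ' x) / ρ x ^ 2) x := fun x hx =>
      (hdd x).div (hρ x) (hρpos x ⟨ht.1.trans_le hx.1, hx.2⟩).ne'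
    have hnum : ∀ x ∈ Set.Ioo t r, (d₁ x * ρ x - d x * ρ' x) / ρ x ^ 2 = 0 := fun x hx => by
      have hx' : x ∈ Set.Ioo 0 r := ⟨ht.1.trans hx.1, hx.2⟩
      have hz := hMzero x hx'
      have hsq : (d₁ x - d x / ρ x * ρ' x) ^ 2 = 0 :=
        le_antisymm (by nlinarith [sq_nonneg (κ x)]) (sq_nonneg _)
      have hlin := pow_eq_zero_iff (two_ne_zero) |>.1 hsq
      have hne := (hIoo hx').ne'
      field_simp at hlin ⊢
      linarith
    have l1 := le_of_hasDerivAt_nonneg ht.2.le hq (fun x hx => (hnum x hx).ge)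
    have l2 := le_of_hasDerivAt_nonneg ht.2.le (fun x hx => (hq x hx).neg)
      (fun x hx => by rw [hnum x hx, neg_zero])
    simp only [Pi.neg_apply, hdr, zero_div, neg_zero] at l1 l2
    have : d t / ρ t = 0 := le_antisymm l1 (by linarith)
    exact (div_eq_zero_iff.1 this).resolve_right (hIoo ht).ne'
  have hszero : ∀ t ∈ Set.Ioo 0 r, s t = 0 := fun t ht => by
    have := deriv_eq_zero_of_hasDerivAt_nonneg (continuousOn_of_hasDerivAt hΩd _)
      (fun t _ => hΩd t) (fun t ht => by rw [hdzero t ht]; ring_nf; positivity)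
      (by rw [hΩ0, hΩr]) ht
    rw [hdzero t ht] at this
    have hs2 : s t ^ 2 = 0 := by nlinarith
    exact pow_eq_zero_iff (two_ne_zero) |>.1 hs2
  have hy0 : ∀ t ∈ Set.Ioo 0 r, y t = 0 := fun t ht => Complex.ext (hszero t ht) (hdzero t ht)
  have hmid : r / 2 ∈ Set.Ioo 0 r := ⟨by linarith, by linarith⟩
  refine ⟨a + (r / 2 : ℝ) * e, hy0 _ hmid, ?_⟩
  have heD : e * D (r / 2) = 0 := by
    refine (hyd (r / 2)).unique ((hasDerivAt_const (r / 2) (0 : ℂ)).congr_of_eventuallyEq ?_)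
    filter_upwards [Ioo_mem_nhds hmid.1 hmid.2] with t ht
    exact hy0 t ht
  refine (mul_eq_zero.1 heD).resolve_left fun he0 => ?_
  rw [he0] at he_re
  norm_num at he_re

namespace AiryPair

variable {f f' g g' : ℂ → ℂ}

/-- A double zero of the determinant at a pair of conjugate points produces a real solution with
real squared derivative. -/
theorem exists_real_sol_of_double_zero (h : AiryPair f f' g g') {z : ℂ}
    (h0 : f z * g ((starRingEnd ℂ) z) - f ((starRingEnd ℂ) z) * g z = 0)
    (h1 : (f' z * g ((starRingEnd ℂ) z) - f ((starRingEnd ℂ) z) * g' z) +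
      (f z * g' ((starRingEnd ℂ) z) - f' ((starRingEnd ℂ) z) * g z) = 0) :
    ∃ w w' : ℂ → ℂ, AirySol w w' ∧ (∀ x : ℝ, (w x).im = 0 ∧ (w' x).im = 0) ∧ w z = 0 ∧
      (w' z ^ 2).im = 0 ∧ ∀ y, w y = 0 → w' y ≠ 0 := by
  have hp := h.determinant_partials z ((starRingEnd ℂ) z)
  have hW := h.wronskian z
  have hreal : ∀ x : ℝ, (f x).im = 0 ∧ (f' x).im = 0 ∧ (g x).im = 0 ∧ (g' x).im = 0 := fun x => by
    have e1 := h.f_conj x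
    have e2 := h.f'_conj x
    have e3 := h.g_conj x
    have e4 := h.g'_conj x
    rw [Complex.conj_ofReal] at e1 e2 e3 e4
    exact ⟨Complex.conj_eq_iff_im.1 e1.symm, Complex.conj_eq_iff_im.1 e2.symm,
      Complex.conj_eq_iff_im.1 e3.symm, Complex.conj_eq_iff_im.1 e4.symm⟩
  rw [h.f_conj, h.g_conj] at h0
  rw [h.f_conj, h.g_conj, h.f'_conj, h.g'_conj] at h1 hp
  obtain ⟨k, A, B, hk0, hA, hB, hk⟩ : ∃ (k : ℂ) (A B : ℝ), k ≠ 0 ∧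
      (A : ℂ) = k * (starRingEnd ℂ) (g z) ∧ (B : ℂ) = -k * (starRingEnd ℂ) (f z) ∧
      k * (f' z * (starRingEnd ℂ) (g z) - (starRingEnd ℂ) (f z) * g' z) = (starRingEnd ℂ) k := by
    by_cases hg : g z = 0
    · refine ⟨f z, 0, -Complex.normSq (f z), fun hf => ?_, ?_, ?_, ?_⟩
      · simp [hf, hg] at hW
      · simp [hg]
      · push_cast; rw [Complex.normSq_eq_conj_mul_self]; ring
      · simp only [hg, map_zero] at h0 hW ⊢
        linear_combination ((starRingEnd ℂ) (f z)) * hW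
    · have hr : (starRingEnd ℂ) (-(g z) * (starRingEnd ℂ) (f z)) =
          -(g z) * (starRingEnd ℂ) (f z) := by
        simp only [map_mul, map_neg, Complex.conj_conj]
        linear_combination (-1) * h0
      refine ⟨g z, Complex.normSq (g z), (-(g z) * (starRingEnd ℂ) (f z)).re, hg, ?_, ?_, ?_⟩
      · rw [Complex.normSq_eq_conj_mul_self]; ring
      · exact Complex.conj_eq_iff_re.1 hr
      · linear_combination ((starRingEnd ℂ) (g z)) * hW + g' z * h0
  have hw := h.left.add_smul h.right (A : ℂ) (B : ℂ)
  refine ⟨_, _, hw, fun x => ?_, ?_, ?_, fun y hy hy' => ?_⟩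
  · obtain ⟨e1, e2, e3, e4⟩ := hreal x
    simp [e1, e2, e3, e4]
  · simp only [hA, hB]
    linear_combination k * h0
  · have hsq : (f' z * (starRingEnd ℂ) (g z) - (starRingEnd ℂ) (f z) * g' z) *
        (f' z * (starRingEnd ℂ) (g z) - (starRingEnd ℂ) (f z) * g' z) = 1 := by
      linear_combination (f' z * (starRingEnd ℂ) (g z) - (starRingEnd ℂ) (f z) * g' z) * h1 - hp -
        (f' z * (starRingEnd ℂ) (g' z) - (starRingEnd ℂ) (f' z) * g' z) * h0
    have hval : (A : ℂ) * f' z + B * g' z = (starRingEnd ℂ) k := by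
      rw [← hk, hA, hB]; ring
    simp only [hval]
    have hkk : ((starRingEnd ℂ) k) ^ 2 = (f' z * (starRingEnd ℂ) (g z) -
        (starRingEnd ℂ) (f z) * g' z) * ((Complex.normSq k : ℝ) : ℂ) := by
      rw [Complex.normSq_eq_conj_mul_self, pow_two]
      linear_combination (-(starRingEnd ℂ) k) * hk
    rw [hkk]
    rcases mul_self_eq_one_iff.1 hsq with hq | hq <;> simp [hq]
  · have hWy := h.wronskian y
    have hA0 : (A : ℂ) = 0 := by linear_combination (-(A : ℂ)) * hWy + g y * hy' - g' y * hy
    have hB0 : (B : ℂ) = 0 := by linear_combination (-(B : ℂ)) * hWy + f' y * hy - f y * hy'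
    rw [hA0] at hA
    rw [hB0] at hB
    have hg0 : g z = 0 := by simpa [hk0] using hA.symm
    have hf0 : f z = 0 := by simpa [hk0] using hB.symm
    simp [hf0, hg0] at hW

/-- Left of the sector there is no double zero as long as `f` does not vanish on the segment of the
ray `arg z = π/3`. -/
theorem not_double_zero_of_ray (h : AiryPair f f' g g') {e : ℂ} (he_re : e.re = 1 / 2)
    (he_im : e.im = √3 / 2) {a r : ℝ} (ha : a ≤ 0) (hr : 0 < r)
    (hray : ∀ t : ℝ, 0 < t → t ≤ r → f (t * e) ≠ 0) {z : ℂ} (hz : z = a + r * e)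
    (h0 : f z * g ((starRingEnd ℂ) z) - f ((starRingEnd ℂ) z) * g z = 0)
    (h1 : (f' z * g ((starRingEnd ℂ) z) - f ((starRingEnd ℂ) z) * g' z) +
      (f z * g' ((starRingEnd ℂ) z) - f' ((starRingEnd ℂ) z) * g z) = 0) : False := by
  have h3 : √3 * √3 = 3 := Real.mul_self_sqrt (by norm_num)
  have he2 : e ^ 2 = e - 1 := by
    apply Complex.ext
    · simp [pow_two, he_re, he_im]; nlinarith
    · simp [pow_two, he_re, he_im]; ring
  have he3 : e ^ 3 = -1 := by linear_combination (e + 1) * he2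
  have hee : e * (starRingEnd ℂ) e = 1 := by
    rw [Complex.mul_conj, Complex.normSq_apply, he_re, he_im]
    norm_cast
    nlinarith
  obtain ⟨w, w', hw, hreal, hwz, hwz', hne⟩ := h.exists_real_sol_of_double_zero h0 h1
  have hline : ∀ t : ℝ, HasDerivAt (fun t : ℝ => (t : ℂ) * e) e t := fun t => by
    simpa using ((hasDerivAt_id (t : ℂ)).mul_const e).comp_ofReal
  have hre : ∀ {k : ℝ → ℂ} {k' : ℂ} {t : ℝ}, HasDerivAt k k' t →
      HasDerivAt (fun t => (k t).re) k'.re t := fun hk =>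
    Complex.reCLM.hasFDerivAt.comp_hasDerivAt _ hk
  set ρ : ℝ → ℝ := fun t => (f (t * e) * (starRingEnd ℂ) e).re with hρ
  have hρd : ∀ t : ℝ, HasDerivAt ρ (f' (t * e)).re t := fun t => by
    refine (hre (((h.left.hasDerivAt _).comp t (hline t)).mul_const _)).congr_deriv ?_
    rw [mul_assoc, hee, mul_one]
  have hρd' : ∀ t : ℝ, HasDerivAt (fun t : ℝ => (f' (t * e)).re) (-t * ρ t) t := fun t => by
    refine (hre ((h.left.hasDerivAt' _).comp t (hline t))).congr_deriv ?_
    have e1 : t * e * f (t * e) * e = ((-t : ℝ) : ℂ) * (f (t * e) * (starRingEnd ℂ) e) := by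
      have : (starRingEnd ℂ) e = -e ^ 2 := by
        linear_combination ((starRingEnd ℂ) e) * he3 - e ^ 2 * hee
      rw [this]; push_cast; ring
    rw [e1, Complex.re_ofReal_mul]
  have hρne : ∀ t ∈ Set.Ioc 0 r, ρ t ≠ 0 := fun t ht hzero => by
    have := h.f_ray hee he3 t
    change (ρ t : ℂ) = _ at this
    rw [hzero, Complex.ofReal_zero, eq_comm] at this
    rcases mul_eq_zero.1 this with h' | h'
    · exact hray t ht.1 ht.2 h'
    · rw [h', mul_zero] at hee; exact zero_ne_one hee
  have hρ0 : ρ 0 = 0 := by simp [hρ, h.f_zero]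
  have hρ'0 : (f' ((0 : ℝ) * e)).re = 1 := by simp [h.f'_zero]
  have hpos : ∀ t ∈ Set.Ioc 0 r, 0 < ρ t := by
    have hev : ∀ᶠ t in nhdsWithin 0 (Set.Ioi 0), 0 < ρ t := by
      have l2 := (hρd 0).tendsto_slope_zero_right
      rw [hρ'0] at l2
      filter_upwards [l2.eventually (lt_mem_nhds one_pos), self_mem_nhdsWithin] with t ht ht0
      simp only [zero_add, hρ0, sub_zero, smul_eq_mul] at ht
      exact (pos_iff_pos_of_mul_pos ht).1 (inv_pos.2 ht0)
    intro t ht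
    by_contra hneg
    have hneg' : ρ t < 0 := lt_of_le_of_ne (not_lt.1 hneg) (hρne t ht)
    obtain ⟨t₀, ht₀, hlt⟩ := (hev.and (Ioo_mem_nhdsGT ht.1)).exists
    obtain ⟨x, hx, hx0⟩ := intermediate_value_Icc' (hlt.2.le)
      (continuousOn_of_hasDerivAt hρd _) ⟨hneg'.le, ht₀.le⟩
    exact hρne x ⟨hlt.1.trans_le hx.1, hx.2.trans ht.2⟩ hx0
  subst hz
  obtain ⟨y, hy, hy'⟩ := hw.picone_ray he_re he_im ha hr hρd hρd' hρ0 hρ'0 hpos (hreal a).1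
    (hreal a).2 hwz hwz'
  exact hne y hy hy'

end AiryPair

theorem exists_primitive {E : Type*} [NormedAddCommGroup E] [NormedSpace ℝ E] [CompleteSpace E]
    {u : ℝ → E} (hu : Continuous u) (a : ℝ) :
    ∃ U : ℝ → E, (∀ x, HasDerivAt U (u x) x) ∧ U a = 0 :=
  ⟨fun x => ∫ t in a..x, u t, fun _ => intervalIntegral.integral_hasDerivAt_right
    (hu.intervalIntegrable _ _) (hu.stronglyMeasurableAtFilter _ _) hu.continuousAt,
    intervalIntegral.integral_same⟩

theorem eq_of_hasDerivAt_zero {E : Type*} [NormedAddCommGroup E] [NormedSpace ℝ E]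
    {u : ℝ → E} (hu : ∀ x, HasDerivAt u 0 x) (x y : ℝ) : u x = u y :=
  is_const_of_deriv_eq_zero (fun x => (hu x).differentiableAt) (fun x => (hu x).deriv) x y

theorem norm_sub_le_of_hasDerivAt {u u' : ℝ → ℂ} {B B' : ℝ → ℝ} {a b : ℝ} (hab : a ≤ b)
    (hu : ∀ x, HasDerivAt u (u' x) x) (hB : ∀ x, HasDerivAt B (B' x) x)
    (hle : ∀ x ∈ Set.Icc a b, ‖u' x‖ ≤ B' x) : ‖u b - u a‖ ≤ B b - B a := by
  refine image_norm_le_of_norm_deriv_right_le_deriv_boundary (a := a) (b := b)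
    (f := fun x => u x - u a) (B := fun x => B x - B a) (B' := B')
    (fun x _ => ((hu x).sub_const _).continuousAt.continuousWithinAt)
    (fun x _ => ((hu x).sub_const _).hasDerivWithinAt) (by simp)
    (fun x => (hB x).sub_const _) (fun x hx => hle x ⟨hx.1, hx.2.le⟩) ⟨hab, le_rfl⟩

/-- `|p|² + |q|²` is controlled by `|p² - q²|` and `Re (p q̄)`. -/
theorem normSq_add_normSq_le (p q : ℂ) :
    Complex.normSq p + Complex.normSq q ≤ ‖p ^ 2 - q ^ 2‖ + ‖p * (starRingEnd ℂ) q +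
      q * (starRingEnd ℂ) p‖ := by
  have h1 : ‖p ^ 2 - q ^ 2‖ ^ 2 = (p.re ^ 2 - p.im ^ 2 - (q.re ^ 2 - q.im ^ 2)) ^ 2 +
      (2 * p.re * p.im - 2 * q.re * q.im) ^ 2 := by
    rw [Complex.sq_norm, Complex.normSq_apply]; simp [pow_two]; ring
  have h2 : ‖p * (starRingEnd ℂ) q + q * (starRingEnd ℂ) p‖ ^ 2 =
      (2 * (p.re * q.re + p.im * q.im)) ^ 2 := by
    rw [Complex.sq_norm, Complex.normSq_apply]; simp; ring
  refine abs_le_of_sq_le_sq' ?_ (by positivity) |>.2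
  rw [add_sq' ‖p ^ 2 - q ^ 2‖, h1, h2, Complex.normSq_apply, Complex.normSq_apply]
  have : 0 ≤ ‖p ^ 2 - q ^ 2‖ * ‖p * (starRingEnd ℂ) q + q * (starRingEnd ℂ) p‖ := by positivity
  nlinarith

/-- The mixed product of the boundary derivatives of a nonreal eigenfunction is controlled by its
norm; the proof compares `y` with the reflected solution `x ↦ conj (y (-x))`. -/
theorem norm_mixed_boundary_le {y y₁ : ℝ → ℂ} {κ : ℂ} {ε k : ℝ} {NP NQ : ℝ → ℝ} (hε : 0 < ε)
    (hy : ∀ x, HasDerivAt y (y₁ x) x)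
    (hy₁ : ∀ x : ℝ, HasDerivAt y₁ (-(κ + I * ε * x) * y x) x) (hl : y (-1) = 0) (hr : y 1 = 0)
    (hκ : κ.im ≠ 0) (hηε : |κ.im| ≤ ε) (hkpos : 0 < k) (hkK : k * k = κ.re)
    (hNP : ∀ x, HasDerivAt NP (‖y x‖ ^ 2) x) (hNP0 : NP (-1) = 0)
    (hNQ : ∀ x, HasDerivAt NQ (‖y₁ x‖ ^ 2) x) (hNQ0 : NQ (-1) = 0)
    (hQN : NQ 1 = κ.re * NP 1) (hamgm : ∀ A B : ℝ, 2 * (A * B) ≤ k * A ^ 2 + B ^ 2 / k) :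
    ‖y₁ 1 * (starRingEnd ℂ) (y₁ (-1)) + y₁ (-1) * (starRingEnd ℂ) (y₁ 1)‖ ≤
      (3 * ε + 2 * ε * k) * NP 1 := by
  have h11 : (-1 : ℝ) ≤ 1 := by norm_num
  have hyc : Continuous y := continuous_iff_continuousAt.2 fun x => (hy x).continuousAt
  obtain ⟨K, hK⟩ : ∃ K, κ.re = K := ⟨_, rfl⟩
  obtain ⟨η, hη⟩ : ∃ η, κ.im = η := ⟨_, rfl⟩
  set yr : ℝ → ℂ := fun x => (starRingEnd ℂ) (y (-x)) with hyr
  set y₁r : ℝ → ℂ := fun x => -(starRingEnd ℂ) (y₁ (-x)) with hy₁r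
  have hstar : ∀ {k : ℝ → ℂ} {k' : ℝ → ℂ}, (∀ t, HasDerivAt k (k' t) t) → ∀ t,
      HasDerivAt (fun t => (starRingEnd ℂ) (k (-t))) (-(starRingEnd ℂ) (k' (-t))) t :=
    fun hk t => by
    have h1 := (hk (-t)).scomp t (hasDerivAt_neg t)
    have h2 := Complex.conjCLE.toContinuousLinearMap.hasFDerivAt.comp_hasDerivAt t h1
    refine h2.congr_deriv ?_
    simp
  have hyrd : ∀ x, HasDerivAt yr (y₁r x) x := hstar hy
  have hy₁rd : ∀ x : ℝ, HasDerivAt y₁r (-((starRingEnd ℂ) κ + I * ε * x) * yr x) x := fun x => by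
    refine (hstar hy₁ x).neg.congr_deriv ?_
    simp [hyr]
  have hyrl : yr (-1) = 0 := by simp [hyr, hr]
  have hyrr : yr 1 = 0 := by simp [hyr, hl]
  have hyrc : Continuous yr := continuous_iff_continuousAt.2 fun x => (hyrd x).continuousAt
  obtain ⟨V, hV, hV0⟩ := exists_primitive (hyc.mul hyrc) (-1)
  have hconjκ : (starRingEnd ℂ) κ - κ ≠ 0 := fun h0 =>
    hκ (Complex.conj_eq_iff_im.1 (sub_eq_zero.1 h0))
  have hV1 : V 1 = 0 := by
    have := eq_of_hasDerivAt_zero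
      (u := fun x => y₁ x * yr x - y x * y₁r x - ((starRingEnd ℂ) κ - κ) * V x)
      (fun x => ((((hy₁ x).mul (hyrd x)).sub ((hy x).mul (hy₁rd x))).sub
        ((hV x).const_mul _)).congr_deriv (by simp only [Pi.mul_apply]; ring)) 1 (-1)
    simp only [hl, hr, hyrl, hyrr, hV0] at this
    simpa [hconjκ] using this
  rw [hK] at hkK hQN
  rw [hη] at hηε
  have hκeq : κ = K + I * η := by rw [mul_comm, ← hK, ← hη]; exact (Complex.re_add_im κ).symm
  have hκceq : (starRingEnd ℂ) κ = K - I * η := by rw [hκeq]; simp; ring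
  have hNPr : ∀ x, HasDerivAt (fun x => NP 1 - NP (-x)) (‖y (-x)‖ ^ 2) x := fun x =>
    (((hNP (-x)).comp x (hasDerivAt_neg x)).const_sub (NP 1)).congr_deriv (by ring)
  have hNQr : ∀ x, HasDerivAt (fun x => NQ 1 - NQ (-x)) (‖y₁ (-x)‖ ^ 2) x := fun x =>
    (((hNQ (-x)).comp x (hasDerivAt_neg x)).const_sub (NQ 1)).congr_deriv (by ring)
  have u := norm_sub_le_of_hasDerivAt
    (u := fun x => x * (y₁ x * y₁r x) + x * (K + I * ε * x) * (y x * yr x) - y₁ x * yr x -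
      (2 * K + I * η) * V x)
    (u' := fun x => 3 * I * ε * x * (y x * yr x) - I * η * x * (y x * y₁r x - y₁ x * yr x))
    (B := fun x => 3 * ε / 2 * (NP x + (NP 1 - NP (-x))) +
      ε / 2 * (k * NP x + (NQ 1 - NQ (-x)) / k + (NQ x / k + k * (NP 1 - NP (-x))))) h11
    (fun x => by
      have hid : HasDerivAt (fun x : ℝ => (x : ℂ)) 1 x := Complex.ofRealCLM.hasDerivAt
      have hlin : HasDerivAt (fun x : ℝ => (K : ℂ) + I * ε * x) (I * ε) x := by
        simpa using (hid.const_mul (I * ε)).const_add (K : ℂ)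
      refine ((((hid.mul ((hy₁ x).mul (hy₁rd x))).add ((hid.mul hlin).mul
        ((hy x).mul (hyrd x)))).sub ((hy₁ x).mul (hyrd x))).sub
        ((hV x).const_mul (2 * K + I * η : ℂ))).congr_deriv ?_
      simp only [Pi.mul_apply]
      rw [hκceq, hκeq]
      ring)
    (fun x => ((((hNP x).add (hNPr x)).const_mul (3 * ε / 2))).add
      (((((hNP x).const_mul k).add ((hNQr x).div_const k)).add
        (((hNQ x).div_const k).add ((hNPr x).const_mul k))).const_mul (ε / 2)))
    (fun x hx => by
      have hx1 : |x| ≤ 1 := abs_le.2 ⟨hx.1, hx.2⟩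
      have nr : ‖yr x‖ = ‖y (-x)‖ := by simp [hyr]
      have nr₁ : ‖y₁r x‖ = ‖y₁ (-x)‖ := by simp [hy₁r]
      have e1 : ‖3 * I * ε * x * (y x * yr x)‖ ≤ 3 * ε * (‖y x‖ * ‖y (-x)‖) := by
        simp only [norm_mul, nr, Complex.norm_I, Complex.norm_real, Real.norm_eq_abs,
          abs_of_pos hε, Complex.norm_ofNat]
        have := mul_le_mul_of_nonneg_left hx1 (by positivity : 0 ≤ 3 * ε * (‖y x‖ * ‖y (-x)‖))
        linarith
      have e2 : ‖I * η * x * (y x * y₁r x - y₁ x * yr x)‖ ≤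
          ε * (‖y x‖ * ‖y₁ (-x)‖ + ‖y₁ x‖ * ‖y (-x)‖) := by
        rw [norm_mul, norm_mul, norm_mul, Complex.norm_I, Complex.norm_real, Complex.norm_real,
          Real.norm_eq_abs, Real.norm_eq_abs, one_mul]
        have t1 : ‖y x * y₁r x - y₁ x * yr x‖ ≤ ‖y x‖ * ‖y₁ (-x)‖ + ‖y₁ x‖ * ‖y (-x)‖ := by
          refine (norm_sub_le _ _).trans (le_of_eq ?_)
          rw [norm_mul, norm_mul, nr, nr₁]
        have t2 : |η| * |x| ≤ ε := by nlinarith [abs_nonneg η, abs_nonneg x]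
        exact mul_le_mul t2 t1 (norm_nonneg _) hε.le
      refine (norm_sub_le _ _).trans ((add_le_add e1 e2).trans ?_)
      have a1 := hamgm ‖y x‖ ‖y₁ (-x)‖
      have a2 := hamgm ‖y (-x)‖ ‖y₁ x‖
      have a3 := two_mul_le_add_sq ‖y x‖ ‖y (-x)‖
      nlinarith)
  have hdiv : K * NP 1 / k = k * NP 1 := by rw [← hkK]; field_simp
  simp only [hl, hr, hyrl, hyrr, hV0, hV1, hNP0, hNQ0, neg_neg, hQN, sub_self, sub_zero,
    zero_div, hdiv] at u
  have e : y₁ 1 * (starRingEnd ℂ) (y₁ (-1)) + y₁ (-1) * (starRingEnd ℂ) (y₁ 1) =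
      -((1 : ℝ) * (y₁ 1 * y₁r 1) - ((-1 : ℝ) : ℂ) * (y₁ (-1) * y₁r (-1))) := by
    simp [hy₁r]; ring
  rw [e, norm_neg]
  simp only [mul_zero, add_zero, sub_zero] at u
  linarith

/-- A priori bounds for nonreal eigenvalues of `y'' = -(κ + iεx)y`, `y(±1) = 0`. -/
theorem nonreal_eigenvalue_bounds {y y₁ : ℝ → ℂ} {κ : ℂ} {ε : ℝ} (hε : 0 < ε)
    (hy : ∀ x, HasDerivAt y (y₁ x) x)
    (hy₁ : ∀ x : ℝ, HasDerivAt y₁ (-(κ + I * ε * x) * y x) x) (hl : y (-1) = 0) (hr : y 1 = 0)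
    (hnt : y 0 = 0 → y₁ 0 ≠ 0) (hκ : κ.im ≠ 0) :
    1 ≤ 14 * ε ∧ 0 ≤ κ.re ∧ κ.re ≤ 49 * ε ^ 2 ∧ |κ.im| ≤ ε := by
  set K := κ.re with hK
  set η := κ.im with hη
  have hyc : Continuous y := continuous_iff_continuousAt.2 fun x => (hy x).continuousAt
  have hy₁c : Continuous y₁ := continuous_iff_continuousAt.2 fun x => (hy₁ x).continuousAt
  have him : ∀ {k : ℝ → ℂ} {k' : ℂ} {t : ℝ}, HasDerivAt k k' t →
      HasDerivAt (fun t => (k t).im) k'.im t := fun hk =>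
    Complex.imCLM.hasFDerivAt.comp_hasDerivAt _ hk
  have hre : ∀ {k : ℝ → ℂ} {k' : ℂ} {t : ℝ}, HasDerivAt k k' t →
      HasDerivAt (fun t => (k t).re) k'.re t := fun hk =>
    Complex.reCLM.hasFDerivAt.comp_hasDerivAt _ hk
  set s : ℝ → ℝ := fun x => (y x).re with hs
  set d : ℝ → ℝ := fun x => (y x).im with hd
  set s₁ : ℝ → ℝ := fun x => (y₁ x).re with hs₁
  set d₁ : ℝ → ℝ := fun x => (y₁ x).im with hd₁
  have hsd : ∀ x, HasDerivAt s (s₁ x) x := fun x => hre (hy x)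
  have hdd : ∀ x, HasDerivAt d (d₁ x) x := fun x => him (hy x)
  have hs₁d : ∀ x, HasDerivAt s₁ (-(K * s x - (η + ε * x) * d x)) x := fun x =>
    (hre (hy₁ x)).congr_deriv (by simp [hK, hη, hs, hd]; ring)
  have hd₁d : ∀ x, HasDerivAt d₁ (-(K * d x + (η + ε * x) * s x)) x := fun x =>
    (him (hy₁ x)).congr_deriv (by simp [hK, hη, hs, hd]; ring)
  have hsl : s (-1) = 0 := by simp [hs, hl]
  have hdl : d (-1) = 0 := by simp [hd, hl]
  have hsr : s 1 = 0 := by simp [hs, hr]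
  have hdr : d 1 = 0 := by simp [hd, hr]
  set P : ℝ → ℝ := fun x => s x ^ 2 + d x ^ 2 with hP
  set Q : ℝ → ℝ := fun x => s₁ x ^ 2 + d₁ x ^ 2 with hQ
  have hPd : ∀ x, HasDerivAt P (2 * (s x * s₁ x + d x * d₁ x)) x := fun x =>
    (((hsd x).pow 2).add ((hdd x).pow 2)).congr_deriv (by push_cast; ring)
  have hQd : ∀ x, HasDerivAt Q (2 * (s₁ x * -(K * s x - (η + ε * x) * d x) +
      d₁ x * -(K * d x + (η + ε * x) * s x))) x := fun x =>
    (((hs₁d x).pow 2).add ((hd₁d x).pow 2)).congr_deriv (by push_cast; ring)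
  have hP0 : ∀ x, 0 ≤ P x := fun x => by positivity
  have hQ0 : ∀ x, 0 ≤ Q x := fun x => by positivity
  obtain ⟨NP, hNP, hNP0⟩ := exists_primitive
    (continuous_iff_continuousAt.2 fun x => (hPd x).continuousAt) (-1)
  obtain ⟨NQ, hNQ, hNQ0⟩ := exists_primitive
    (continuous_iff_continuousAt.2 fun x => (hQd x).continuousAt) (-1)
  have h11 : (-1 : ℝ) ≤ 1 := by norm_num
  -- positivity of the norm
  have hN : 0 < NP 1 := by
    by_contra hneg
    have hPz : ∀ x ∈ Set.Ioo (-1 : ℝ) 1, P x = 0 := fun x hx =>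
      deriv_eq_zero_of_hasDerivAt_nonneg (continuousOn_of_hasDerivAt hNP _) (fun x _ => hNP x)
        (fun x _ => hP0 x) (by rw [hNP0]; exact not_lt.1 hneg) hx
    have hyz : ∀ x ∈ Set.Ioo (-1 : ℝ) 1, y x = 0 := fun x hx => by
      have := hPz x hx
      simp only [hP] at this
      refine Complex.ext ?_ ?_
      · exact pow_eq_zero_iff two_ne_zero |>.1 (by nlinarith [sq_nonneg (s x), sq_nonneg (d x)] :
          s x ^ 2 = 0)
      · exact pow_eq_zero_iff two_ne_zero |>.1 (by nlinarith [sq_nonneg (s x), sq_nonneg (d x)] :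
          d x ^ 2 = 0)
    refine hnt (hyz 0 (by norm_num)) ((hy 0).unique
      ((hasDerivAt_const (0 : ℝ) (0 : ℂ)).congr_of_eventuallyEq ?_))
    filter_upwards [Ioo_mem_nhds (by norm_num : (-1 : ℝ) < 0) (by norm_num : (0 : ℝ) < 1)]
      with x hx using hyz x hx
  -- energy identity
  have hQN : NQ 1 = K * NP 1 := by
    have := eq_of_hasDerivAt_zero (u := fun x => s x * s₁ x + d x * d₁ x - NQ x + K * NP x)
      (fun x => (((((hsd x).mul (hs₁d x)).add ((hdd x).mul (hd₁d x))).sub (hNQ x)).add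
        ((hNP x).const_mul K)).congr_deriv (by simp only [hP, hQ]; ring)) 1 (-1)
    simp only [hsl, hdl, hsr, hdr, hNP0, hNQ0] at this
    linarith
  -- bound of the imaginary part
  have hT : ∀ x, HasDerivAt (fun x => s x * d₁ x - d x * s₁ x) (-(η + ε * x) * P x) x := fun x =>
    (((hsd x).mul (hd₁d x)).sub ((hdd x).mul (hs₁d x))).congr_deriv (by simp only [hP]; ring)
  have hηε : |η| ≤ ε := by
    have u1 := le_of_hasDerivAt_nonneg h11
      (fun x _ => (hT x).add ((hNP x).const_mul (η + ε)))
      (fun x hx => by nlinarith [mul_nonneg hε.le (mul_nonneg (sub_nonneg.2 hx.2.le) (hP0 x))])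
    have u2 := le_of_hasDerivAt_nonneg h11
      (fun x _ => (hT x).neg.sub ((hNP x).const_mul (η - ε)))
      (fun x hx => by
        have : 0 ≤ x + 1 := by linarith [hx.1]
        nlinarith [mul_nonneg hε.le (mul_nonneg this (hP0 x))])
    simp only [Pi.add_apply, Pi.neg_apply, Pi.sub_apply, hsl, hdl, hsr, hdr, hNP0] at u1 u2
    rw [abs_le]
    constructor <;> nlinarith
  -- Poincaré inequality
  have hK4 : 1 / 4 ≤ K := by
    have u := le_of_hasDerivAt_nonneg h11 (T := fun x => NQ x + x * P x / 2 - NP x / 4)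
      (fun x _ => ((hNQ x).add (((hasDerivAt_id x).mul (hPd x)).div_const 2)).sub
        ((hNP x).div_const 4))
      (fun x hx => by
        simp only [id, hP, hQ]
        have hx2 : 0 ≤ 1 - x ^ 2 := by nlinarith [hx.1, hx.2]
        nlinarith [sq_nonneg (s₁ x + x * s x / 2), sq_nonneg (d₁ x + x * d x / 2),
          mul_nonneg hx2 (sq_nonneg (s x)), mul_nonneg hx2 (sq_nonneg (d x))])
    have hPl : P (-1) = 0 := by simp [hP, hsl, hdl]
    have hPr : P 1 = 0 := by simp [hP, hsr, hdr]
    simp only [hPl, hPr, hNP0, hNQ0, hQN] at u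
    nlinarith
  set k := √K with hk
  have hkK : k * k = K := Real.mul_self_sqrt (by linarith)
  have hk0 : 0 ≤ k := Real.sqrt_nonneg _
  have hk2 : 1 / 2 ≤ k := by nlinarith
  have hkpos : 0 < k := by linarith
  have hamgm : ∀ A B : ℝ, 2 * (A * B) ≤ k * A ^ 2 + B ^ 2 / k := fun A B => by
    have : k * A ^ 2 + B ^ 2 / k - 2 * (A * B) = (k * A - B) ^ 2 / k := by field_simp; ring
    have : 0 ≤ (k * A - B) ^ 2 / k := by positivity
    linarith
  -- Rellich identity
  have hS : 2 * K * NP 1 - 4 * ε * k * NP 1 ≤ Q 1 + Q (-1) := by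
    have u := le_of_hasDerivAt_nonneg h11
      (T := fun x => x * Q x + K * (x * P x) - NQ x - K * NP x + 2 * ε * (k * NP x + NQ x / k))
      (fun x _ => ((((((hasDerivAt_id x).mul (hQd x)).add
        (((hasDerivAt_id x).mul (hPd x)).const_mul K)).sub (hNQ x)).sub
        ((hNP x).const_mul K)).add
        ((((hNP x).const_mul k).add ((hNQ x).div_const k)).const_mul (2 * ε))))
      (fun x hx => by
        simp only [id]
        have c1 : |x * (η + ε * x)| ≤ 2 * ε := by
          have hx1 : |x| ≤ 1 := abs_le.2 ⟨hx.1.le, hx.2.le⟩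
          rw [abs_mul]
          have : |η + ε * x| ≤ 2 * ε := (abs_add_le _ _).trans (by
            rw [abs_mul, abs_of_pos hε]; nlinarith)
          nlinarith [abs_nonneg x, abs_nonneg (η + ε * x)]
        have c2 : |2 * (d x * s₁ x - s x * d₁ x)| ≤ k * P x + Q x / k := by
          have a1 := hamgm (d x) (s₁ x)
          have a2 := hamgm (s x) (-(d₁ x))
          have a3 := hamgm (d x) (-(s₁ x))
          have a4 := hamgm (s x) (d₁ x)
          have e : k * P x + Q x / k = k * d x ^ 2 + s₁ x ^ 2 / k + (k * s x ^ 2 + d₁ x ^ 2 / k) := by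
            simp only [hP, hQ]; ring
          rw [neg_sq] at a2 a3
          rw [e, abs_le]
          constructor <;> linarith
        have c3 : |x * (η + ε * x) * (2 * (d x * s₁ x - s x * d₁ x))| ≤
            2 * ε * (k * P x + Q x / k) := by
          rw [abs_mul]
          exact mul_le_mul c1 c2 (abs_nonneg _) (by positivity)
        have c4 := (abs_le.1 c3).1
        linarith)
    have hPl : P (-1) = 0 := by simp [hP, hsl, hdl]
    have hPr : P 1 = 0 := by simp [hP, hsr, hdr]
    simp only [hPl, hPr, hNP0, hNQ0, hQN] at u
    have hdiv : K * NP 1 / k = k * NP 1 := by rw [← hkK]; field_simp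
    rw [hdiv] at u
    simp at u
    linarith
  have hnP : ∀ x, ‖y x‖ ^ 2 = P x := fun x => by
    rw [Complex.sq_norm, Complex.normSq_apply]; simp only [hP]; ring
  have hnQ : ∀ x, ‖y₁ x‖ ^ 2 = Q x := fun x => by
    rw [Complex.sq_norm, Complex.normSq_apply]; simp only [hQ]; ring
  -- squares of the boundary derivatives
  have hsq : ‖y₁ 1 ^ 2 - y₁ (-1) ^ 2‖ ≤ ε * NP 1 := by
    have u := norm_sub_le_of_hasDerivAt (u := fun x => y₁ x ^ 2 + (κ + I * ε * x) * y x ^ 2)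
      (u' := fun x => I * ε * y x ^ 2) (B := fun x => ε * NP x) h11
      (fun x => by
        have hlin : HasDerivAt (fun x : ℝ => κ + I * ε * x) (I * ε) x := by
          simpa using (((hasDerivAt_id (x : ℂ)).const_mul (I * ε)).const_add κ).comp_ofReal
        refine (((hy₁ x).pow 2).add (hlin.mul ((hy x).pow 2))).congr_deriv ?_
        simp only [Pi.pow_apply]; push_cast; ring)
      (fun x => (hNP x).const_mul ε)
      (fun x _ => by
        rw [norm_mul, norm_mul, Complex.norm_I, norm_pow, hnP, Complex.norm_real,
          Real.norm_eq_abs, abs_of_pos hε, one_mul])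
    simpa [hl, hr, hNP0] using u
  have hmixed := norm_mixed_boundary_le hε hy hy₁ hl hr hκ hηε hkpos hkK
    (fun x => by rw [hnP]; exact hNP x) hNP0 (fun x => by rw [hnQ]; exact hNQ x) hNQ0 hQN hamgm
  have hfin := normSq_add_normSq_le (y₁ 1) (y₁ (-1))
  have hQ1 : Complex.normSq (y₁ 1) + Complex.normSq (y₁ (-1)) = Q 1 + Q (-1) := by
    rw [← Complex.sq_norm, ← Complex.sq_norm, hnQ, hnQ]
  rw [hQ1] at hfin
  have hmain : 2 * (k * k) ≤ 6 * ε * k + 4 * ε := by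
    have : (2 * (k * k)) * NP 1 ≤ (6 * ε * k + 4 * ε) * NP 1 := by rw [hkK]; nlinarith
    exact le_of_mul_le_mul_right this hN
  have hk7 : k ≤ 7 * ε := by
    have : k * k ≤ 7 * ε * k := by nlinarith
    exact le_of_mul_le_mul_right this hkpos
  refine ⟨by linarith, by linarith, ?_, hηε⟩
  rw [← hkK]
  nlinarith

/-- A nonreal zero of `E (·, d₀)` persists for all `d` close to `d₀`. -/
theorem eventually_exists_nonreal_zero {E : ℂ × ℂ → ℂ} (hE : ContDiff ℂ 1 E) {m₀ : ℂ} {d₀ : ℝ}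
    (hm₀ : m₀.im ≠ 0) (h0 : E (m₀, d₀) = 0) {m₁ : ℂ} (h1 : E (m₁, d₀) ≠ 0) :
    ∀ᶠ d : ℝ in nhds d₀, ∃ m : ℂ, m.im ≠ 0 ∧ E (m, d) = 0 := by
  have hcont : Continuous fun p : ℝ × ℂ => E (p.2, p.1) :=
    hE.continuous.comp (continuous_snd.prodMk (Complex.continuous_ofReal.comp continuous_fst))
  have hdiff : ∀ d : ℝ, Differentiable ℂ fun m => E (m, d) := fun d =>
    (hE.differentiable one_ne_zero).comp (differentiable_id.prodMk (differentiable_const _))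
  have hana : ∀ d : ℝ, AnalyticOnNhd ℂ (fun m => E (m, d)) Set.univ := fun d z _ =>
    (hdiff d).analyticAt z
  have hconst : ∀ (d : ℝ) (c : ℂ) (m : ℂ), (∀ᶠ z in nhds m, E (z, d) = c) → ∀ z, E (z, d) = c :=
    fun d c m hev z => congrFun ((hana d).eq_of_eventuallyEq
      (fun z _ => analyticAt_const (v := c)) hev) z
  have hiso : ∀ᶠ z in nhdsWithin m₀ {m₀}ᶜ, E (z, d₀) ≠ 0 := by
    refine ((hdiff d₀).analyticAt m₀).eventually_eq_zero_or_eventually_ne_zero.resolve_left ?_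
    exact fun hev => h1 (hconst d₀ 0 m₀ hev m₁)
  rw [eventually_nhdsWithin_iff, Metric.eventually_nhds_iff] at hiso
  obtain ⟨ρ, hρ, hball⟩ := hiso
  have him : 0 < |m₀.im| := abs_pos.2 hm₀
  obtain ⟨r, hr, hrρ, hrim⟩ : ∃ r : ℝ, 0 < r ∧ r < ρ ∧ r < |m₀.im| :=
    ⟨min ρ |m₀.im| / 2, by positivity,
      (half_lt_self (by positivity)).trans_le (min_le_left _ _),
      (half_lt_self (by positivity)).trans_le (min_le_right _ _)⟩
  have hne : ∀ z ∈ Metric.sphere m₀ r, E (z, d₀) ≠ 0 := fun z hz =>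
    hball (by rw [Metric.mem_sphere.1 hz]; exact hrρ) (fun h => by
      rw [Set.mem_singleton_iff] at h
      rw [h, Metric.mem_sphere, dist_self] at hz
      exact hr.ne hz)
  obtain ⟨c, hc, hcs⟩ : ∃ c : ℝ, 0 < c ∧ ∀ z ∈ Metric.sphere m₀ r, c < ‖E (z, d₀)‖ := by
    obtain ⟨z₀, hz₀, hmin⟩ := (isCompact_sphere m₀ r).exists_isMinOn
      ((NormedSpace.sphere_nonempty).2 hr.le) (hdiff d₀).continuous.norm.continuousOn
    have hp : 0 < ‖E (z₀, d₀)‖ := norm_pos_iff.2 (hne z₀ hz₀)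
    exact ⟨‖E (z₀, d₀)‖ / 2, by positivity, fun z hz => (half_lt_self hp).trans_le (hmin hz)⟩
  have hev1 : ∀ᶠ d : ℝ in nhds d₀, ∀ z ∈ Metric.sphere m₀ r, c < ‖E (z, d) - E (m₀, d)‖ := by
    refine (isCompact_sphere m₀ r).eventually_forall_of_forall_eventually
      (P := fun d z => c < ‖E (z, (d : ℝ)) - E (m₀, (d : ℝ))‖) fun z hz => ?_
    have hc2 : Continuous fun p : ℝ × ℂ => ‖E (p.2, p.1) - E (m₀, p.1)‖ :=
      (hcont.sub (hcont.comp (continuous_fst.prodMk continuous_const))).norm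
    refine hc2.continuousAt.eventually_const_lt ?_
    simpa [h0] using hcs z hz
  have hev2 : ∀ᶠ d : ℝ in nhds d₀, ‖E (m₀, d)‖ < c / 2 := by
    have hc2 : Continuous fun d : ℝ => ‖E (m₀, d)‖ :=
      (hcont.comp (continuous_id.prodMk continuous_const)).norm
    refine hc2.continuousAt.eventually_lt_const ?_
    simpa [h0] using hc
  filter_upwards [hev1, hev2] with d hd1 hd2
  have hsub := ((hdiff d).diffContOnCl (s := Metric.ball m₀ r)).ball_subset_image_closedBall hr
    (fun z hz => (hd1 z hz).le) (by
      by_contra hev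
      rw [Filter.not_frequently] at hev
      obtain ⟨z, hz⟩ := (NormedSpace.sphere_nonempty (x := m₀)).2 hr.le
      have := hconst d _ m₀ (hev.mono fun z hz => not_not.1 hz) z
      have h2 := hd1 z hz
      rw [this, sub_self, norm_zero] at h2
      exact absurd h2 (not_lt.2 hc.le))
  obtain ⟨m, hm, hm0⟩ := hsub (by rw [Metric.mem_ball, dist_zero_left]; exact hd2 :
    (0 : ℂ) ∈ Metric.ball (E (m₀, d)) (c / 2))
  refine ⟨m, fun h => ?_, hm0⟩
  rw [Metric.mem_closedBall, dist_eq_norm] at hm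
  have h2 := (Complex.abs_im_le_norm (m - m₀)).trans hm
  rw [Complex.sub_im, h, zero_sub, abs_neg] at h2
  linarith

/-- A limit of nonreal zeros of a family which is symmetric under conjugation is either nonreal or
a multiple zero. -/
theorem partial_eq_zero_of_tendsto_nonreal_zeros {E : ℂ × ℂ → ℂ} (hE : ContDiff ℂ 1 E)
    (hconj : ∀ (m : ℂ) (d : ℝ), E (m, d) = 0 → E ((starRingEnd ℂ) m, d) = 0)
    {m : ℕ → ℂ} {d : ℕ → ℝ} (him : ∀ n, (m n).im ≠ 0) (h0 : ∀ n, E (m n, d n) = 0)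
    {m₀ : ℂ} {d₀ : ℝ} (hm : Filter.Tendsto m Filter.atTop (nhds m₀))
    (hd : Filter.Tendsto d Filter.atTop (nhds d₀)) (hm₀ : m₀.im = 0) :
    fderiv ℂ E (m₀, d₀) (1, 0) = 0 := by
  set L := fderiv ℂ E (m₀, (d₀ : ℂ)) with hL
  have hs : HasStrictFDerivAt E L (m₀, (d₀ : ℂ)) :=
    hE.contDiffAt.hasStrictFDerivAt one_ne_zero
  by_contra hne
  have hpos : 0 < ‖L (1, 0)‖ := norm_pos_iff.2 hne
  have hdc : Filter.Tendsto (fun n => (d n : ℂ)) Filter.atTop (nhds (d₀ : ℂ)) :=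
    (Complex.continuous_ofReal.tendsto d₀).comp hd
  have hmc : Filter.Tendsto (fun n => (starRingEnd ℂ) (m n)) Filter.atTop (nhds m₀) := by
    have := (Complex.continuous_conj.tendsto m₀).comp hm
    rwa [Complex.conj_eq_iff_im.2 hm₀] at this
  have ht : Filter.Tendsto (fun n => ((m n, (d n : ℂ)), ((starRingEnd ℂ) (m n), (d n : ℂ))))
      Filter.atTop (nhds ((m₀, (d₀ : ℂ)), (m₀, (d₀ : ℂ)))) :=
    (hm.prodMk_nhds hdc).prodMk_nhds (hmc.prodMk_nhds hdc)
  have hev := ht.eventually (hs.isLittleO.def (half_pos hpos))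
  obtain ⟨n, hn⟩ := hev.exists
  have hsm : ((m n, (d n : ℂ)) - ((starRingEnd ℂ) (m n), (d n : ℂ)) : ℂ × ℂ) =
      (m n - (starRingEnd ℂ) (m n)) • (1, 0) := by
    ext <;> simp
  have hmn : 0 < ‖m n - (starRingEnd ℂ) (m n)‖ := norm_pos_iff.2 fun h =>
    him n (Complex.conj_eq_iff_im.1 (sub_eq_zero.1 h).symm)
  simp only [hsm, h0 n, hconj _ _ (h0 n), map_smul, norm_smul, sub_self, zero_sub, norm_neg] at hn
  have h1 : ‖((1, 0) : ℂ × ℂ)‖ = 1 := by simp [Prod.norm_def]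
  rw [h1] at hn
  nlinarith

/-- Continuation principle: zeros can only leave the real axis through a multiple real zero. -/
theorem im_eq_zero_of_no_collision {E : ℂ × ℂ → ℂ} (hE : ContDiff ℂ 1 E) {c M D : ℝ} (hc : 0 < c)
    (hconj : ∀ (m : ℂ) (d : ℝ), E (m, d) = 0 → E ((starRingEnd ℂ) m, d) = 0)
    (hbound : ∀ (m : ℂ) (d : ℝ), 0 < d → d ≤ D → m.im ≠ 0 → E (m, d) = 0 → c ≤ d ∧ ‖m‖ ≤ M)
    (hsimple : ∀ (m : ℂ) (d : ℝ), 0 < d → d ≤ D → m.im = 0 → E (m, d) = 0 →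
      fderiv ℂ E (m, d) (1, 0) ≠ 0)
    {m : ℂ} (hD : 0 < D) (h0 : E (m, D) = 0) : m.im = 0 := by
  by_contra him
  set S : Set ℝ := {d | 0 < d ∧ d ≤ D ∧ ∃ m : ℂ, m.im ≠ 0 ∧ E (m, d) = 0} with hS
  have hSne : S.Nonempty := ⟨D, hD, le_rfl, m, him, h0⟩
  have hSb : BddBelow S := ⟨0, fun d hd => hd.1.le⟩
  have hlow : c ≤ sInf S := le_csInf hSne fun d ⟨h1, h2, m, h3, h4⟩ => (hbound m d h1 h2 h3 h4).1
  have hIpos : 0 < sInf S := hc.trans_le hlow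
  have hID : sInf S ≤ D := csInf_le hSb ⟨hD, le_rfl, m, him, h0⟩
  obtain ⟨d, -, hdt, hdS⟩ := exists_seq_tendsto_sInf hSne hSb
  choose hd0 hdD z hzim hz0 using hdS
  obtain ⟨z₀, -, φ, hφ, hzt⟩ := (isCompact_closedBall (0 : ℂ) M).tendsto_subseq
    (fun n => mem_closedBall_zero_iff.2 (hbound (z n) (d n) (hd0 n) (hdD n) (hzim n) (hz0 n)).2)
  have hdt' := hdt.comp hφ.tendsto_atTop
  have hz₀ : E (z₀, (sInf S : ℝ)) = 0 := by
    have ht : Filter.Tendsto (fun n => E (z (φ n), (d (φ n) : ℂ))) Filter.atTop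
        (nhds (E (z₀, (sInf S : ℝ)))) :=
      (hE.continuous.tendsto _).comp
        (hzt.prodMk_nhds ((Complex.continuous_ofReal.tendsto _).comp hdt'))
    simp only [hz0] at ht
    exact tendsto_nhds_unique ht tendsto_const_nhds
  have hz₀im : z₀.im ≠ 0 := fun him₀ => hsimple z₀ _ hIpos hID him₀ hz₀
    (partial_eq_zero_of_tendsto_nonreal_zeros hE hconj (fun n => hzim (φ n)) (fun n => hz0 (φ n))
      hzt hdt' him₀)
  have hne : E ((|M| + 1 : ℝ) + I, (sInf S : ℝ)) ≠ 0 := fun h => by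
    have h1 := (hbound _ _ hIpos hID (by simp) h).2
    have h2 := Complex.abs_re_le_norm (((|M| + 1 : ℝ) : ℂ) + I)
    rw [Complex.add_re, Complex.ofReal_re, Complex.I_re, add_zero] at h2
    linarith [le_abs_self M, le_abs_self (|M| + 1)]
  obtain ⟨ρ, hρ, hnear⟩ := Metric.eventually_nhds_iff.1
    (eventually_exists_nonreal_zero hE hz₀im hz₀ hne)
  have hmin : 0 < min ρ (sInf S) := lt_min hρ hIpos
  have hlt : min ρ (sInf S) / 2 < min ρ (sInf S) := half_lt_self hmin
  have hd' : sInf S - min ρ (sInf S) / 2 ∈ S := by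
    refine ⟨by linarith [min_le_right ρ (sInf S)], by linarith, hnear ?_⟩
    rw [Real.dist_eq, sub_sub_cancel_left, abs_neg, abs_of_pos (half_pos hmin)]
    exact hlt.trans_le (min_le_left _ _)
  linarith [csInf_le hSb hd']

namespace AiryPair

variable {f f' g g' : ℂ → ℂ}

/-- The determinant `f(m + id) g(m - id) - f(m - id) g(m + id)`. -/
def det (f g : ℂ → ℂ) (p : ℂ × ℂ) : ℂ :=
  f (p.1 + p.2 * I) * g (p.1 - p.2 * I) - f (p.1 - p.2 * I) * g (p.1 + p.2 * I)

theorem contDiff_det (h : AiryPair f f' g g') : ContDiff ℂ 1 (det f g) := by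
  have hf : ContDiff ℂ 1 f :=
    (show Differentiable ℂ f from fun z => (h.left.hasDerivAt z).differentiableAt).contDiff
  have hg : ContDiff ℂ 1 g :=
    (show Differentiable ℂ g from fun z => (h.right.hasDerivAt z).differentiableAt).contDiff
  have h1 : ContDiff ℂ 1 fun p : ℂ × ℂ => p.1 + p.2 * I :=
    contDiff_fst.add (contDiff_snd.mul contDiff_const)
  have h2 : ContDiff ℂ 1 fun p : ℂ × ℂ => p.1 - p.2 * I :=
    contDiff_fst.sub (contDiff_snd.mul contDiff_const)
  exact ((hf.comp h1).mul (hg.comp h2)).sub ((hf.comp h2).mul (hg.comp h1))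

theorem hasDerivAt_det (h : AiryPair f f' g g') (m d : ℂ) :
    HasDerivAt (fun m => det f g (m, d))
      ((f' (m + d * I) * g (m - d * I) - f (m - d * I) * g' (m + d * I)) +
        (f (m + d * I) * g' (m - d * I) - f' (m - d * I) * g (m + d * I))) m := by
  have f1 := (h.left.hasDerivAt (m + d * I)).comp_add_const m (d * I)
  have f2 := (h.left.hasDerivAt (m - d * I)).comp_sub_const m (d * I)
  have g1 := (h.right.hasDerivAt (m + d * I)).comp_add_const m (d * I)
  have g2 := (h.right.hasDerivAt (m - d * I)).comp_sub_const m (d * I)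
  exact ((f1.mul g2).sub (f2.mul g1)).congr_deriv (by ring)

theorem fderiv_det (h : AiryPair f f' g g') (m d : ℂ) :
    fderiv ℂ (det f g) (m, d) (1, 0) =
      (f' (m + d * I) * g (m - d * I) - f (m - d * I) * g' (m + d * I)) +
        (f (m + d * I) * g' (m - d * I) - f' (m - d * I) * g (m + d * I)) := by
  have h1 : HasDerivAt (fun m : ℂ => (m, d)) (1, 0) m :=
    (hasDerivAt_id m).prodMk (hasDerivAt_const m d)
  have h2 := ((h.contDiff_det.differentiable one_ne_zero) (m, d)).hasFDerivAt.comp_hasDerivAt m h1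
  exact h2.unique (h.hasDerivAt_det m d)

theorem det_conj (h : AiryPair f f' g g') (m : ℂ) (d : ℝ) (h0 : det f g (m, d) = 0) :
    det f g ((starRingEnd ℂ) m, d) = 0 := by
  have e1 : (starRingEnd ℂ) m + d * I = (starRingEnd ℂ) (m - d * I) := by simp
  have e2 : (starRingEnd ℂ) m - d * I = (starRingEnd ℂ) (m + d * I) := by simp; ring
  simp only [det] at h0 ⊢
  rw [e1, e2, h.f_conj, h.f_conj, h.g_conj, h.g_conj, ← map_mul, ← map_mul, ← map_sub,
    map_eq_zero]
  linear_combination -h0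

/-- Simplicity of the real zeros as long as `f` has no zero on the corresponding part of the ray
`arg z = π / 3`. -/
theorem not_double_zero (h : AiryPair f f' g g') {μ d : ℝ} (hd : 0 < d)
    (hray : ∀ t : ℝ, 0 < t → t ≤ 2 * d / √3 → f (t * exp ((π / 3 : ℝ) * I)) ≠ 0)
    (h0 : det f g (μ, d) = 0) : fderiv ℂ (det f g) (μ, d) (1, 0) ≠ 0 := by
  rw [h.fderiv_det]
  intro h1
  simp only [det] at h0
  have h3 : √3 * √3 = 3 := Real.mul_self_sqrt (by norm_num)
  have h3p : 0 < √3 := by positivity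
  have hzc : (μ : ℂ) - d * I = (starRingEnd ℂ) ((μ : ℂ) + d * I) := by simp; ring
  by_cases hμ : μ ≤ d / √3
  · rw [hzc] at h0 h1
    refine h.not_double_zero_of_ray (e := exp ((π / 3 : ℝ) * I)) (a := μ - d / √3)
      (r := 2 * d / √3) ?_ ?_ (by linarith) (by positivity) hray ?_ h0 h1
    · rw [Complex.exp_ofReal_mul_I_re, Real.cos_pi_div_three]
    · rw [Complex.exp_ofReal_mul_I_im, Real.sin_pi_div_three]
    · apply Complex.ext
      · rw [Complex.add_re, Complex.add_re, Complex.re_ofReal_mul, Complex.re_ofReal_mul,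
          Complex.exp_ofReal_mul_I_re, Real.cos_pi_div_three]
        simp
        ring
      · rw [Complex.add_im, Complex.add_im, Complex.im_ofReal_mul, Complex.im_ofReal_mul,
          Complex.exp_ofReal_mul_I_im, Real.sin_pi_div_three]
        simp
        field_simp
  · rw [not_le] at hμ
    have hμ0 : 0 < μ := lt_trans (by positivity) hμ
    set z : ℂ := (μ : ℂ) + d * I with hz
    have hre : z.re = μ := by simp [hz]
    have him : z.im = d := by simp [hz]
    have hz0 : z ≠ 0 := fun h => by rw [h] at hre; simp at hre; linarith
    have hn : 0 < ‖z‖ := norm_pos_iff.2 hz0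
    have harg0 : 0 < z.arg := by
      rw [Complex.arg_of_re_nonneg (by rw [hre]; exact hμ0.le), him]
      exact Real.arcsin_pos.2 (by positivity)
    have hn2 : ‖z‖ ^ 2 = μ ^ 2 + d ^ 2 := by
      rw [Complex.sq_norm, Complex.normSq_apply, hre, him]; ring
    have harg : z.arg < π / 3 := by
      rw [Complex.arg_of_re_nonneg (by rw [hre]; exact hμ0.le), him,
        Real.arcsin_lt_iff_lt_sin' ⟨by linarith [Real.pi_pos], by linarith [Real.pi_pos]⟩,
        Real.sin_pi_div_three, div_lt_iff₀ hn]
      rw [div_lt_iff₀ h3p] at hμ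
      refine lt_of_pow_lt_pow_left₀ 2 (by positivity) ?_
      rw [mul_pow, hn2]
      nlinarith
    have hpolar : z = ‖z‖ * exp (2 * (z.arg / 2 : ℝ) * I) := by
      conv_lhs => rw [← Complex.norm_mul_exp_arg_mul_I z]
      push_cast
      ring_nf
    refine h.not_double_zero_of_sector hn (half_pos harg0) (by linarith) hpolar ?_ h0 h1
    rw [hzc]
    conv_lhs => rw [hpolar]
    rw [map_mul, Complex.conj_ofReal, ← Complex.exp_conj]
    simp only [map_mul, Complex.conj_ofReal, Complex.conj_I, map_ofNat, mul_neg, neg_mul]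

/-- A priori bounds for the nonreal zeros of the determinant. -/
theorem det_nonreal_zero_bounds (h : AiryPair f f' g g') {m : ℂ} {d : ℝ} (hd : 0 < d)
    (hm : m.im ≠ 0) (h0 : det f g (m, d) = 0) :
    1 ≤ 14 * d ^ 3 ∧ ‖m‖ ≤ 49 * d ^ 4 + d := by
  have hw := h.left.add_smul h.right (g (m - d * I)) (-f (m - d * I))
  set w : ℂ → ℂ := fun z => g (m - d * I) * f z + -f (m - d * I) * g z with hwdef
  set w' : ℂ → ℂ := fun z => g (m - d * I) * f' z + -f (m - d * I) * g' z with hwdef₁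
  have hline : ∀ x : ℝ, HasDerivAt (fun x : ℝ => m + d * I * x) (d * I) x := fun x => by
    simpa using (((hasDerivAt_id (x : ℂ)).const_mul (d * I)).const_add m).comp_ofReal
  have hy : ∀ x : ℝ, HasDerivAt (fun x : ℝ => w (m + d * I * x)) (d * I * w' (m + d * I * x)) x :=
    fun x => ((hw.hasDerivAt _).comp x (hline x)).congr_deriv (by ring)
  have hy₁ : ∀ x : ℝ, HasDerivAt (fun x : ℝ => d * I * w' (m + d * I * x))
      (-((d : ℂ) ^ 2 * m + I * (d ^ 3 : ℝ) * x) * w (m + d * I * x)) x := fun x =>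
    (((hw.hasDerivAt' _).comp x (hline x)).const_mul (d * I)).congr_deriv (by
      push_cast
      linear_combination ((d : ℂ) ^ 2 * (m + d * I * x) * w (m + d * I * x)) * Complex.I_sq)
  have him : ((d : ℂ) ^ 2 * m).im = d ^ 2 * m.im := by
    rw [← Complex.ofReal_pow, Complex.im_ofReal_mul]
  have hre : ((d : ℂ) ^ 2 * m).re = d ^ 2 * m.re := by
    rw [← Complex.ofReal_pow, Complex.re_ofReal_mul]
  have hb := nonreal_eigenvalue_bounds (κ := (d : ℂ) ^ 2 * m) (ε := d ^ 3) (by positivity) hy hy₁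
    (by
      have e : m + d * I * ((-1 : ℝ) : ℂ) = m - d * I := by push_cast; ring
      simp only [e, hwdef]
      ring)
    (by
      have e : m + d * I * ((1 : ℝ) : ℂ) = m + d * I := by push_cast; ring
      simp only [e, hwdef]
      simp only [det] at h0
      linear_combination h0)
    (fun hz hz₁ => by
      have hdI : (d : ℂ) * I ≠ 0 := mul_ne_zero (by exact_mod_cast hd.ne') Complex.I_ne_zero
      have e2 := (mul_eq_zero.1 hz₁).resolve_left hdI
      simp only [Complex.ofReal_zero, mul_zero, add_zero, hwdef, hwdef₁] at hz e2
      have hW := h.wronskian m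
      have hg : g (m - d * I) = 0 := by
        linear_combination g m * e2 - g' m * hz - g (m - d * I) * hW
      have hf : f (m - d * I) = 0 := by
        linear_combination f m * e2 - f' m * hz - f (m - d * I) * hW
      have := h.wronskian (m - d * I)
      rw [hf, hg] at this
      simp at this)
    (by rw [him]; exact mul_ne_zero (by positivity) hm)
  rw [him, hre] at hb
  obtain ⟨b1, b2, b3, b4⟩ := hb
  have hd2 : 0 < d ^ 2 := by positivity
  refine ⟨b1, (Complex.norm_le_abs_re_add_abs_im m).trans (add_le_add ?_ ?_)⟩
  · rw [abs_of_nonneg (nonneg_of_mul_nonneg_right b2 hd2)]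
    exact le_of_mul_le_mul_left (b3.trans_eq (by ring)) hd2
  · rw [abs_mul, abs_of_pos hd2] at b4
    exact le_of_mul_le_mul_left (b4.trans_eq (by ring)) hd2

/-- All zeros of the determinant are real before the first zero of `f` on the ray
`arg z = π / 3` is reached. -/
theorem im_eq_zero_of_det_eq_zero (h : AiryPair f f' g g') {D : ℝ} (hD : 0 < D)
    (hray : ∀ t : ℝ, 0 < t → t ≤ 2 * D / √3 → f (t * exp ((π / 3 : ℝ) * I)) ≠ 0)
    {m : ℂ} (h0 : det f g (m, D) = 0) : m.im = 0 := by
  refine im_eq_zero_of_no_collision h.contDiff_det (c := 1 / 14) (M := 49 * D ^ 4 + D)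
    (by norm_num) h.det_conj (fun m d hd hdD hm hz => ?_) (fun m d hd hdD hm hz => ?_) hD h0
  · obtain ⟨b1, b2⟩ := h.det_nonreal_zero_bounds hd hm hz
    refine ⟨?_, b2.trans (by gcongr)⟩
    by_contra! hlt
    have h2 : d ^ 3 < (1 / 14) ^ 3 := by gcongr
    linarith
  · have hmr : m = (m.re : ℂ) := by apply Complex.ext <;> simp [hm]
    rw [hmr] at hz ⊢
    exact h.not_double_zero hd (fun t ht htd => hray t ht (htd.trans (by gcongr))) hz

end AiryPair

theorem IsAiry.airySol {w : ℂ → ℂ} {a b : ℝ} (hw : IsAiry w a b) : AirySol w (deriv w) :=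
  ⟨fun z => (hw.1 z).hasDerivAt, fun z => by rw [← hw.2.2.1 z]; exact (hw.2.1 z).hasDerivAt⟩

theorem Uminus_zero {Ai Bi : ℂ → ℂ} (hAi : IsAiryAi Ai) (hBi : IsAiryBi Bi) :
    Uminus Ai Bi 0 = 0 := by
  have e : √3 * (3 : ℝ) ^ (-(2 : ℝ) / 3) = (3 : ℝ) ^ (-(1 : ℝ) / 6) := by
    rw [Real.sqrt_eq_rpow, ← Real.rpow_add (by norm_num)]; norm_num
  rw [Uminus, hAi.2.2.2.1, hBi.2.2.2.1, ← e]
  push_cast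
  ring

theorem Uplus_zero_ne {Ai Bi : ℂ → ℂ} (hAi : IsAiryAi Ai) (hBi : IsAiryBi Bi) :
    Uplus Ai Bi 0 ≠ 0 := by
  have hΓ : 0 < Real.Gamma (2 / 3) := Real.Gamma_pos_of_pos (by norm_num)
  rw [Uplus, hAi.2.2.2.1, hBi.2.2.2.1]
  norm_cast
  positivity

theorem deriv_Uminus_zero_ne {Ai Bi : ℂ → ℂ} (hAi : IsAiryAi Ai) (hBi : IsAiryBi Bi) :
    -(√3 : ℂ) * deriv Ai 0 + 1 * deriv Bi 0 ≠ 0 := by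
  have hΓ : 0 < Real.Gamma (1 / 3) := Real.Gamma_pos_of_pos (by norm_num)
  rw [hAi.2.2.2.2, hBi.2.2.2.2, neg_div, Complex.ofReal_neg, neg_mul_neg, one_mul]
  norm_cast
  positivity

theorem deriv_Uplus_zero {Ai Bi : ℂ → ℂ} (hAi : IsAiryAi Ai) (hBi : IsAiryBi Bi) :
    (√3 : ℂ) * deriv Ai 0 + 1 * deriv Bi 0 = 0 := by
  have e : √3 * (3 : ℝ) ^ (-(1 : ℝ) / 3) = (3 : ℝ) ^ ((1 : ℝ) / 6) := by
    rw [Real.sqrt_eq_rpow, ← Real.rpow_add (by norm_num)]; norm_num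
  rw [hAi.2.2.2.2, hBi.2.2.2.2, ← e]
  push_cast
  ring

/-- `U₋` and `U₊` are multiples of the solutions normalised at the origin. -/
theorem exists_airyPair {Ai Bi : ℂ → ℂ} (hAi : IsAiryAi Ai) (hBi : IsAiryBi Bi) :
    ∃ (f f' g g' : ℂ → ℂ) (a b : ℂ), AiryPair f f' g g' ∧ a ≠ 0 ∧ b ≠ 0 ∧
      (∀ z, f z = a * Uminus Ai Bi z) ∧ ∀ z, g z = b * Uplus Ai Bi z := by
  have hA := IsAiry.airySol hAi
  have hB := IsAiry.airySol hBi
  have h1 := deriv_Uminus_zero_ne hAi hBi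
  have h2 := Uplus_zero_ne hAi hBi
  have h3 := Uminus_zero hAi hBi
  have h4 := deriv_Uplus_zero hAi hBi
  have hU := hA.add_smul hB (-(√3 : ℂ)) 1
  have hV := hA.add_smul hB (√3 : ℂ) 1
  refine ⟨_, _, _, _, (-(√3 : ℂ) * deriv Ai 0 + 1 * deriv Bi 0)⁻¹, (Uplus Ai Bi 0)⁻¹,
    ⟨hU.add_smul hU (-(√3 : ℂ) * deriv Ai 0 + 1 * deriv Bi 0)⁻¹ 0,
      hV.add_smul hV (Uplus Ai Bi 0)⁻¹ 0, ?_, ?_, ?_, ?_⟩, inv_ne_zero h1, inv_ne_zero h2,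
    fun z => ?_, fun z => ?_⟩
  · rw [Uminus] at h3
    rw [one_mul (Bi 0), h3, mul_zero, mul_zero, add_zero]
  · rw [zero_mul, add_zero, inv_mul_cancel₀ h1]
  · rw [one_mul, zero_mul, add_zero]
    exact inv_mul_cancel₀ h2
  · rw [h4]; simp
  · simp [Uminus]
  · simp [Uplus]

/-- For `0 < ε < ε₁ = (√3·α₁/2)³`, where `α₁` is the smallest modulus of a zero of `U₋`
on the ray `arg z = π/3`, every zero of `λ ↦ W(ε,λ)` is real and simple. -/
theorem all_eigenvalues_real_simple_before_first_collision (Ai Bi : ℂ → ℂ)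
    (hAi : IsAiryAi Ai) (hBi : IsAiryBi Bi)
    (α₁ : ℝ) (hα₁ : IsLeast (rayZeroModuli (Uminus Ai Bi)) α₁)
    (ε : ℝ) (hε : 0 < ε) (hε' : ε < (Real.sqrt 3 * α₁ / 2) ^ 3)
    (lam : ℂ) (hlam : airyW Ai Bi ε lam = 0) :
    lam.im = 0 ∧ deriv (airyW Ai Bi ε) lam ≠ 0 := by
  obtain ⟨f, f', g, g', a, b, h, ha, hb, hf, hg⟩ := exists_airyPair hAi hBi
  obtain ⟨δ, hδ⟩ : ∃ δ : ℝ, ε ^ ((1 : ℝ) / 3) = δ := ⟨_, rfl⟩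
  have hδ0 : 0 < δ := hδ ▸ Real.rpow_pos_of_pos hε _
  have hδ3 : δ ^ 3 = ε := by
    rw [← hδ, ← Real.rpow_natCast, ← Real.rpow_mul hε.le]; norm_num
  have hα : 0 < α₁ := hα₁.1.1
  have h3 : √3 * √3 = 3 := Real.mul_self_sqrt (by norm_num)
  have h3p : 0 < √3 := by positivity
  have hlt : δ < √3 * α₁ / 2 := lt_of_pow_lt_pow_left₀ 3 (by positivity) (hδ3 ▸ hε')
  have hray : ∀ t : ℝ, 0 < t → t ≤ 2 * δ / √3 → f (t * exp ((π / 3 : ℝ) * I)) ≠ 0 := by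
    intro t ht htδ hft
    rw [hf] at hft
    have h1 : α₁ ≤ t := hα₁.2 ⟨ht, (mul_eq_zero.1 hft).resolve_left ha⟩
    have h2 : α₁ ≤ 2 * δ / √3 := h1.trans htδ
    rw [le_div_iff₀ h3p] at h2
    linarith
  have hs : (2 * √3 : ℂ) ≠ 0 := by exact_mod_cast (by positivity : 2 * √3 ≠ 0)
  have hdet : ∀ l : ℂ, AiryPair.det f g (l * δ, δ) =
      -(a * b * (2 * √3)) * airyW Ai Bi ε l := fun l => by
    have e1 : l * δ + δ * I = (δ : ℂ) * (l + I) := by ring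
    have e2 : l * δ - δ * I = (δ : ℂ) * (l - I) := by ring
    simp only [AiryPair.det, airyW, hδ, e1, e2, hf, hg, Uminus, Uplus]
    ring
  have hC : -(a * b * (2 * √3)) ≠ 0 := neg_ne_zero.2 (mul_ne_zero (mul_ne_zero ha hb) hs)
  have h0 : AiryPair.det f g (lam * δ, δ) = 0 := by rw [hdet, hlam, mul_zero]
  have him : lam.im = 0 := by
    have := h.im_eq_zero_of_det_eq_zero hδ0 hray h0
    rw [Complex.im_mul_ofReal] at this
    exact (mul_eq_zero.1 this).resolve_right hδ0.ne'
  refine ⟨him, fun hder => ?_⟩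
  have hreal : lam * δ = ((lam.re * δ : ℝ) : ℂ) := by apply Complex.ext <;> simp [him]
  refine h.not_double_zero (μ := lam.re * δ) hδ0 hray (hreal ▸ h0) ?_
  have h1 := (h.hasDerivAt_det (lam * δ) δ).comp lam ((hasDerivAt_id lam).mul_const (δ : ℂ))
  rw [← h.fderiv_det, one_mul] at h1
  have hfun : (fun m => AiryPair.det f g (m, δ)) ∘ (fun l : ℂ => id l * (δ : ℂ)) =
      fun l => -(a * b * (2 * √3)) * airyW Ai Bi ε l := funext hdet
  have h2 := h1.deriv
  change deriv ((fun m => AiryPair.det f g (m, δ)) ∘ (fun l : ℂ => id l * (δ : ℂ))) lam = _ at h2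
  rw [hfun, deriv_const_mul_field, hder, mul_zero, hreal] at h2
  exact (mul_eq_zero.1 h2.symm).resolve_right (by exact_mod_cast hδ0.ne')
end
end
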